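/- If G is a planar triangulation on n vertices, then τ(G) = n − 2. -/

import Mathlib

open SimpleGraph

variable {V : Type*}

/-- A triangle transversal of `G`: a set of edges of `G` meeting every triangle of `G`
(so that its removal leaves a triangle-free graph). -/
def IsTriangleTransversal (G : SimpleGraph V) (X : Finset (Sym2 V)) : Prop :=
  ↑X ⊆ G.edgeSet ∧
    ∀ t : Finset V, G.IsNClique 3 t → ∃ e ∈ X, ∀ v ∈ e, v ∈ t

/-- A triangle packing of `G`: a set of pairwise edge-disjoint triangles of `G`. -/
def IsTrianglePacking (G : SimpleGraph V) (Y : Finset (Finset V)) : Prop :=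
  (∀ t ∈ Y, G.IsNClique 3 t) ∧
    ∀ s ∈ Y, ∀ t ∈ Y, s ≠ t →
      ∀ e ∈ G.edgeSet, ¬ ((∀ v ∈ e, v ∈ s) ∧ (∀ v ∈ e, v ∈ t))

/-- `tau G` is the minimum size of a triangle transversal of `G`. -/
noncomputable def tau (G : SimpleGraph V) : ℕ :=
  sInf {n | ∃ X : Finset (Sym2 V), IsTriangleTransversal G X ∧ X.card = n}

/-- `nu G` is the maximum size of a triangle packing of `G`. -/
noncomputable def nu (G : SimpleGraph V) : ℕ :=
  sSup {n | ∃ Y : Finset (Finset V), IsTrianglePacking G Y ∧ Y.card = n}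

/-- A drawing of the graph `G` in the plane (identified with `ℂ`): vertices are mapped to
distinct points, each edge is realized by a simple continuous arc joining the images of its
endpoints, arcs of distinct edges meet only in common endpoints, and no arc passes through
the image of any other vertex. -/
structure PlaneEmbedding (G : SimpleGraph V) where
  vtx : V → ℂ
  arc : V → V → Set ℂ
  vtx_inj : Function.Injective vtx
  arc_symm : ∀ u v : V, arc u v = arc v u
  arc_curve : ∀ ⦃u v : V⦄, G.Adj u v → ∃ γ : ℝ → ℂ,
    ContinuousOn γ (Set.Icc 0 1) ∧ Set.InjOn γ (Set.Icc 0 1) ∧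
    γ 0 = vtx u ∧ γ 1 = vtx v ∧ arc u v = γ '' Set.Icc 0 1
  arc_inter : ∀ ⦃u v x y : V⦄, G.Adj u v → G.Adj x y → s(u, v) ≠ s(x, y) →
    arc u v ∩ arc x y ⊆ ({vtx u, vtx v} : Set ℂ) ∩ ({vtx x, vtx y} : Set ℂ)
  arc_vtx : ∀ ⦃u v : V⦄, G.Adj u v → ∀ w : V, vtx w ∈ arc u v → w = u ∨ w = v

/-- The set of points of the plane used by a plane embedding. -/
def PlaneEmbedding.drawing {G : SimpleGraph V} (E : PlaneEmbedding G) : Set ℂ :=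
  Set.range E.vtx ∪ ⋃ (u : V) (v : V) (_ : G.Adj u v), E.arc u v

/-- A graph is planar if it admits a plane embedding. -/
def PlanarGraph (G : SimpleGraph V) : Prop := Nonempty (PlaneEmbedding G)

/-- A maximal planar graph (planar triangulation): a planar graph such that adding any
edge between nonadjacent vertices destroys planarity. -/
def MaximalPlanar (G : SimpleGraph V) : Prop :=
  PlanarGraph G ∧ ∀ u v : V, u ≠ v → ¬ G.Adj u v →
    ¬ PlanarGraph (G ⊔ SimpleGraph.fromEdgeSet {s(u, v)})

open Topology Filter

/-- A function that is locally constant along a preconnected set is constant on it. -/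
theorem IsPreconnected.eq_of_eventually_eq {X α : Type*} [TopologicalSpace X] {O : Set X}
    (hO : IsPreconnected O) {f : X → α} (h : ∀ x ∈ O, ∀ᶠ y in 𝓝[O] x, f y = f x)
    {x y : X} (hx : x ∈ O) (hy : y ∈ O) : f x = f y := by
  refine hO.induction₂ (fun a b => f a = f b) ?_ ?_ ?_ hx hy
  · intro x hx
    filter_upwards [h x hx] with y hy using hy.symm
  all_goals intros; simp_all

/-- If `g` is constant off a set with dense complement near every point of an open preconnected
set `O`, then it is constant on the part of `O` off that set. -/
theorem IsPreconnected.eq_of_locally_const_off {X α : Type*} [TopologicalSpace X] {O D : Set X}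
    (hO : IsPreconnected O) (hOo : IsOpen O) (hD : Dense Dᶜ) {g : X → α}
    (h : ∀ x ∈ O, ∃ c, ∀ᶠ y in 𝓝 x, y ∉ D → g y = c)
    {x y : X} (hx : x ∈ O) (hy : y ∈ O) (hxD : x ∉ D) (hyD : y ∉ D) : g x = g y := by
  classical
  have : Nonempty α := ⟨g x⟩
  choose! c hc using h
  have key : c x = c y := by
    refine hO.eq_of_eventually_eq (f := c) ?_ hx hy
    intro z hz
    rw [hOo.nhdsWithin_eq hz]
    filter_upwards [(hc z hz).eventually_nhds, hOo.mem_nhds hz] with z' h1 h2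
    obtain ⟨w, hw, hw1, hw2⟩ := hD.inter_nhds_nonempty (h1.and (hc z' h2))
    rw [← hw1 hw, ← hw2 hw]
  rw [(hc x hx).self_of_nhds hxD, (hc y hy).self_of_nhds hyD, key]

/-- A finite straight-line plane graph in general position: segments joining nodes with distinct
real parts, any two of which meet only in nodes. -/
structure SegmentGraph (S : Type*) where
  /-- The first endpoint of a segment. -/
  fst : S → ℂ
  /-- The second endpoint of a segment. -/
  snd : S → ℂ
  /-- The nodes; some of them may be isolated. -/
  nodes : Set ℂ
  nodes_finite : nodes.Finite
  fst_mem : ∀ s, fst s ∈ nodes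
  snd_mem : ∀ s, snd s ∈ nodes
  fst_ne_snd : ∀ s, fst s ≠ snd s
  re_injOn : nodes.InjOn Complex.re
  inter : ∀ ⦃s s' : S⦄, s ≠ s' → ∀ z ∈ segment ℝ (fst s) (snd s),
    z ∈ segment ℝ (fst s') (snd s') → z ∈ nodes
  node_mem : ∀ w ∈ nodes, ∀ s, w ∈ segment ℝ (fst s) (snd s) → w = fst s ∨ w = snd s

namespace SegmentGraph

variable {S : Type*} (Γ : SegmentGraph S)

/-- The closed segment with index `s`. -/
def seg (s : S) : Set ℂ := segment ℝ (Γ.fst s) (Γ.snd s)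

/-- The height of the line through segment `s` at abscissa `t`. -/
noncomputable def height (s : S) (t : ℝ) : ℝ :=
  (Γ.fst s).im + (t - (Γ.fst s).re) *
    (((Γ.snd s).im - (Γ.fst s).im) / ((Γ.snd s).re - (Γ.fst s).re))

/-- The open interval of abscissas of a segment. -/
def span (s : S) : Set ℝ := Set.uIoo (Γ.fst s).re (Γ.snd s).re

/-- The union of all nodes and segments. -/
def support : Set ℂ := Γ.nodes ∪ ⋃ s, Γ.seg s

/-- The face containing a point. -/
def face (z : ℂ) : Set ℂ := connectedComponentIn Γ.supportᶜ z

theorem re_ne (s : S) : (Γ.fst s).re ≠ (Γ.snd s).re :=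
  fun h => Γ.fst_ne_snd s (Γ.re_injOn (Γ.fst_mem s) (Γ.snd_mem s) h)

theorem height_fst (s : S) : Γ.height s (Γ.fst s).re = (Γ.fst s).im := by
  simp [height]

theorem height_snd (s : S) : Γ.height s (Γ.snd s).re = (Γ.snd s).im := by
  have := sub_ne_zero.2 (Γ.re_ne s).symm
  rw [height]; field_simp; ring

theorem continuous_height (s : S) : Continuous (Γ.height s) := by
  unfold height; fun_prop

theorem height_combo (s : S) {a b : ℝ} (hab : a + b = 1) (x y : ℝ) :
    Γ.height s (a * x + b * y) = a * Γ.height s x + b * Γ.height s y := by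
  obtain rfl : b = 1 - a := by linarith
  unfold height; ring

theorem convex_above (s : S) : Convex ℝ {z : ℂ | Γ.height s z.re < z.im} := by
  intro x hx y hy a b ha hb hab
  simp only [Set.mem_ofPred_eq] at *
  have h1 : (a • x + b • y).re = a * x.re + b * y.re := by simp
  have h2 : (a • x + b • y).im = a * x.im + b * y.im := by simp
  rw [h1, h2, height_combo _ _ hab]
  rcases ha.eq_or_lt with rfl | ha
  · obtain rfl : b = 1 := by linarith
    simpa using hy
  · nlinarith [mul_lt_mul_of_pos_left hx ha, mul_le_mul_of_nonneg_left hy.le hb]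

theorem convex_below (s : S) : Convex ℝ {z : ℂ | z.im < Γ.height s z.re} := by
  intro x hx y hy a b ha hb hab
  simp only [Set.mem_ofPred_eq] at *
  have h1 : (a • x + b • y).re = a * x.re + b * y.re := by simp
  have h2 : (a • x + b • y).im = a * x.im + b * y.im := by simp
  rw [h1, h2, height_combo _ _ hab]
  rcases ha.eq_or_lt with rfl | ha
  · obtain rfl : b = 1 := by linarith
    simpa using hy
  · nlinarith [mul_lt_mul_of_pos_left hx ha, mul_le_mul_of_nonneg_left hy.le hb]

theorem mem_seg_iff (s : S) (z : ℂ) :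
    z ∈ Γ.seg s ↔ z.re ∈ Set.uIcc (Γ.fst s).re (Γ.snd s).re ∧ z.im = Γ.height s z.re := by
  constructor
  · rintro ⟨a, b, ha, hb, hab, rfl⟩
    have hre : (a • Γ.fst s + b • Γ.snd s).re = a * (Γ.fst s).re + b * (Γ.snd s).re := by simp
    refine ⟨?_, ?_⟩
    · rw [← segment_eq_uIcc, hre]
      exact ⟨a, b, ha, hb, hab, by simp⟩
    · rw [hre, height_combo _ _ hab, height_fst, height_snd]; simp
  · rintro ⟨h1, h2⟩
    rw [← segment_eq_uIcc] at h1
    obtain ⟨a, b, ha, hb, hab, h⟩ := h1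
    refine ⟨a, b, ha, hb, hab, Complex.ext ?_ ?_⟩
    · simpa using h
    · rw [h2, ← h]
      simp only [smul_eq_mul]
      rw [height_combo _ _ hab, height_fst, height_snd]; simp

theorem isClosed_seg (s : S) : IsClosed (Γ.seg s) := by
  have : Γ.seg s = {z | z.re ∈ Set.uIcc (Γ.fst s).re (Γ.snd s).re} ∩
      {z | z.im = Γ.height s z.re} := by ext z; exact Γ.mem_seg_iff s z
  rw [this]
  exact (isClosed_Icc.preimage Complex.continuous_re).inter
    (isClosed_eq Complex.continuous_im ((Γ.continuous_height s).comp Complex.continuous_re))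

theorem seg_subset_support (s : S) : Γ.seg s ⊆ Γ.support :=
  fun _ hz => Or.inr (Set.mem_iUnion.2 ⟨s, hz⟩)

theorem fst_mem_seg (s : S) : Γ.fst s ∈ Γ.seg s := left_mem_segment ..

theorem snd_mem_seg (s : S) : Γ.snd s ∈ Γ.seg s := right_mem_segment ..

theorem isClosed_support [Finite S] : IsClosed Γ.support :=
  Γ.nodes_finite.isClosed.union (isClosed_iUnion_of_finite Γ.isClosed_seg)

theorem bounded_support [Finite S] : ∃ R : ℝ, ∀ z ∈ Γ.support, ‖z‖ ≤ R := by
  have h : IsCompact Γ.support :=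
    Γ.nodes_finite.isCompact.union (isCompact_iUnion fun s => by
      rw [seg, segment_eq_image_lineMap]
      exact isCompact_Icc.image AffineMap.lineMap_continuous)
  exact h.isBounded.exists_norm_le

theorem span_subset (s : S) : Γ.span s ⊆ Set.uIcc (Γ.fst s).re (Γ.snd s).re :=
  Set.uIoo_subset_uIcc_self

theorem point_mem_seg (s : S) {t : ℝ} (ht : t ∈ Γ.span s) : (⟨t, Γ.height s t⟩ : ℂ) ∈ Γ.seg s :=
  (Γ.mem_seg_iff s _).2 ⟨Γ.span_subset s ht, rfl⟩

theorem isOpen_span (s : S) : IsOpen (Γ.span s) := isOpen_Ioo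

theorem point_notMem_nodes (s : S) {t : ℝ} (ht : t ∈ Γ.span s) :
    (⟨t, Γ.height s t⟩ : ℂ) ∉ Γ.nodes := by
  intro h
  rw [span, Set.uIoo, Set.mem_Ioo] at ht
  rcases Γ.node_mem _ h s (Γ.point_mem_seg s ht) with h | h
  · have := congrArg Complex.re h; simp only at this; subst this
    rcases le_total (Γ.fst s).re (Γ.snd s).re with h' | h' <;> simp [h'] at ht
  · have := congrArg Complex.re h; simp only at this; subst this
    rcases le_total (Γ.fst s).re (Γ.snd s).re with h' | h' <;> simp [h'] at ht

/-- A point of a segment that is not a node has its abscissa in the open span. -/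
theorem re_mem_span {s : S} {z : ℂ} (hz : z ∈ Γ.seg s) (hn : z ∉ Γ.nodes) :
    z.re ∈ Γ.span s := by
  obtain ⟨h1, h2⟩ := (Γ.mem_seg_iff s z).1 hz
  have ne1 : z.re ≠ (Γ.fst s).re := fun h => hn (by
    rw [show z = Γ.fst s from Complex.ext h (by rw [h2, h, height_fst])]; exact Γ.fst_mem s)
  have ne2 : z.re ≠ (Γ.snd s).re := fun h => hn (by
    rw [show z = Γ.snd s from Complex.ext h (by rw [h2, h, height_snd])]; exact Γ.snd_mem s)
  rw [Set.mem_uIcc] at h1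
  rw [span, Set.uIoo, Set.mem_Ioo, inf_lt_iff, lt_sup_iff]
  grind

theorem point_eq {s : S} {z : ℂ} (hz : z ∈ Γ.seg s) : (⟨z.re, Γ.height s z.re⟩ : ℂ) = z :=
  Complex.ext rfl ((Γ.mem_seg_iff s z).1 hz).2.symm

theorem dense_compl_support [Finite S] : Dense Γ.supportᶜ := by
  rw [← interior_eq_empty_iff_dense_compl]
  by_contra hne
  obtain ⟨z, hz⟩ := Set.nonempty_iff_ne_empty.2 hne
  have hfin : ({y : ℝ | (⟨z.re, y⟩ : ℂ) ∈ Γ.support}).Finite := by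
    refine ((Γ.nodes_finite.image Complex.im).union
      (Set.finite_range fun s => Γ.height s z.re)).subset ?_
    rintro y (h | h)
    · exact Or.inl ⟨_, h, rfl⟩
    · obtain ⟨s, hs⟩ := Set.mem_iUnion.1 h
      exact Or.inr ⟨s, ((Γ.mem_seg_iff s _).1 hs).2.symm⟩
  have hcont : Continuous fun y : ℝ => (⟨z.re, y⟩ : ℂ) :=
    Complex.equivRealProdCLM.symm.continuous.comp (by fun_prop : Continuous fun y : ℝ => (z.re, y))
  have hmem : {y : ℝ | (⟨z.re, y⟩ : ℂ) ∈ Γ.support} ∈ 𝓝 z.im :=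
    hcont.continuousAt.preimage_mem_nhds (mem_interior_iff_mem_nhds.1 hz)
  exact (infinite_of_mem_nhds z.im hmem) hfin

theorem face_eq_of_preconnected {C : Set ℂ} (hC : IsPreconnected C) (hCs : C ⊆ Γ.supportᶜ)
    {z z' : ℂ} (hz : z ∈ C) (hz' : z' ∈ C) : Γ.face z = Γ.face z' :=
  connectedComponentIn_eq (hC.subset_connectedComponentIn hz hCs hz')

theorem mem_face {z : ℂ} (hz : z ∉ Γ.support) : z ∈ Γ.face z := mem_connectedComponentIn hz

theorem face_subset (z : ℂ) : Γ.face z ⊆ Γ.supportᶜ := connectedComponentIn_subset ..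

theorem face_eq_of_mem {z z' : ℂ} (h : z' ∈ Γ.face z) : Γ.face z' = Γ.face z :=
  (connectedComponentIn_eq h).symm

theorem eventually_face_eq [Finite S] {z : ℂ} (hz : z ∉ Γ.support) :
    ∀ᶠ z' in 𝓝 z, Γ.face z' = Γ.face z := by
  have := (Γ.isClosed_support.isOpen_compl.connectedComponentIn (x := z)).mem_nhds (Γ.mem_face hz)
  filter_upwards [this] with z' hz' using Γ.face_eq_of_mem hz'

/-- Near an interior point of a segment, the points above it lie in one face and so do the
points below it. -/
theorem exists_local_sides [Finite S] (s : S) {t : ℝ} (ht : t ∈ Γ.span s) :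
    ∃ f g : Set ℂ, ∀ᶠ z in 𝓝 (⟨t, Γ.height s t⟩ : ℂ),
      (Γ.height s z.re < z.im → z ∉ Γ.support ∧ Γ.face z = f) ∧
      (z.im < Γ.height s z.re → z ∉ Γ.support ∧ Γ.face z = g) := by
  set m : ℂ := ⟨t, Γ.height s t⟩
  set K : Set ℂ := Γ.nodes ∪ ⋃ s' : {s' // s' ≠ s}, Γ.seg s'
  have hK : IsClosed K :=
    Γ.nodes_finite.isClosed.union (isClosed_iUnion_of_finite fun s' => Γ.isClosed_seg s')
  have hmK : m ∉ K := by
    rintro (h | h)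
    · exact Γ.point_notMem_nodes s ht h
    · obtain ⟨⟨s', hs'⟩, h⟩ := Set.mem_iUnion.1 h
      exact Γ.point_notMem_nodes s ht (Γ.inter hs' _ h (Γ.point_mem_seg s ht))
  obtain ⟨r, hr, hball⟩ := Metric.isOpen_iff.1 hK.isOpen_compl m hmK
  have hoff : ∀ z ∈ Metric.ball m r, z.im ≠ Γ.height s z.re → z ∉ Γ.support := by
    intro z hz hne h
    rcases h with h | h
    · exact hball hz (Or.inl h)
    · obtain ⟨s', h⟩ := Set.mem_iUnion.1 h
      by_cases hs : s' = s
      · subst hs; exact hne ((Γ.mem_seg_iff _ _).1 h).2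
      · exact hball hz (Or.inr (Set.mem_iUnion.2 ⟨⟨s', hs⟩, h⟩))
  have convU := (convex_ball m r).inter (Γ.convex_above s)
  have convL := (convex_ball m r).inter (Γ.convex_below s)
  have hup : (⟨t, Γ.height s t + r / 2⟩ : ℂ) ∈ Metric.ball m r ∩ {z | Γ.height s z.re < z.im} := by
    refine ⟨?_, by simp only [Set.mem_ofPred_eq]; linarith⟩
    rw [Metric.mem_ball, Complex.dist_of_re_eq (by rfl), Real.dist_eq]
    simp only [m, add_sub_cancel_left]
    rw [abs_of_pos (by positivity)]; linarith
  have hdn : (⟨t, Γ.height s t - r / 2⟩ : ℂ) ∈ Metric.ball m r ∩ {z | z.im < Γ.height s z.re} := by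
    refine ⟨?_, by simp only [Set.mem_ofPred_eq]; linarith⟩
    rw [Metric.mem_ball, Complex.dist_of_re_eq (by rfl), Real.dist_eq]
    simp only [m, sub_sub_cancel_left, abs_neg]
    rw [abs_of_pos (by positivity)]; linarith
  refine ⟨_, _, Filter.eventually_of_mem (Metric.ball_mem_nhds m hr) fun z hz =>
    ⟨fun h => ⟨hoff z hz h.ne', Γ.face_eq_of_preconnected convU.isPreconnected ?_ ⟨hz, h⟩ hup⟩,
     fun h => ⟨hoff z hz h.ne, Γ.face_eq_of_preconnected convL.isPreconnected ?_ ⟨hz, h⟩ hdn⟩⟩⟩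
  · rintro z ⟨h1, h2⟩; exact hoff z h1 (ne_of_gt h2)
  · rintro z ⟨h1, h2⟩; exact hoff z h1 (ne_of_lt h2)

theorem continuous_mk_im (t : ℝ) : Continuous fun y : ℝ => (⟨t, y⟩ : ℂ) :=
  Complex.equivRealProdCLM.symm.continuous.comp (by fun_prop : Continuous fun y : ℝ => (t, y))

theorem continuous_point (s : S) : Continuous fun t : ℝ => (⟨t, Γ.height s t⟩ : ℂ) :=
  Complex.equivRealProdCLM.symm.continuous.comp
    (continuous_id.prodMk (Γ.continuous_height s) : Continuous fun t : ℝ => (t, Γ.height s t))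

theorem frequently_above (s : S) (t : ℝ) :
    ∃ᶠ z in 𝓝 (⟨t, Γ.height s t⟩ : ℂ), Γ.height s z.re < z.im := by
  have h : Tendsto (fun y : ℝ => (⟨t, y⟩ : ℂ)) (𝓝[>] (Γ.height s t)) (𝓝 ⟨t, Γ.height s t⟩) :=
    ((continuous_mk_im t).tendsto _).mono_left nhdsWithin_le_nhds
  exact h.frequently (Eventually.frequently (f := 𝓝[>] Γ.height s t) self_mem_nhdsWithin)

theorem frequently_below (s : S) (t : ℝ) :
    ∃ᶠ z in 𝓝 (⟨t, Γ.height s t⟩ : ℂ), z.im < Γ.height s z.re := by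
  have h : Tendsto (fun y : ℝ => (⟨t, y⟩ : ℂ)) (𝓝[<] (Γ.height s t)) (𝓝 ⟨t, Γ.height s t⟩) :=
    ((continuous_mk_im t).tendsto _).mono_left nhdsWithin_le_nhds
  exact h.frequently (Eventually.frequently (f := 𝓝[<] Γ.height s t) self_mem_nhdsWithin)

theorem span_nonempty (s : S) : (Γ.span s).Nonempty := by
  rw [span, Set.uIoo, Set.nonempty_Ioo]
  exact inf_lt_sup.2 (Γ.re_ne s)

theorem exists_sides [Finite S] (s : S) : ∃ f g : Set ℂ, ∀ t ∈ Γ.span s,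
    ∀ᶠ z in 𝓝 (⟨t, Γ.height s t⟩ : ℂ),
      (Γ.height s z.re < z.im → z ∉ Γ.support ∧ Γ.face z = f) ∧
      (z.im < Γ.height s z.re → z ∉ Γ.support ∧ Γ.face z = g) := by
  choose! f g hfg using fun t (ht : t ∈ Γ.span s) => Γ.exists_local_sides s ht
  have hpre : IsPreconnected (Γ.span s) := isPreconnected_Ioo
  have hloc : ∀ t ∈ Γ.span s, ∀ᶠ t' in 𝓝[Γ.span s] t, f t' = f t ∧ g t' = g t := by
    intro t ht
    rw [(Γ.isOpen_span s).nhdsWithin_eq ht]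
    filter_upwards [((Γ.continuous_point s).tendsto t).eventually (hfg t ht).eventually_nhds,
      (Γ.isOpen_span s).mem_nhds ht] with t' h1 h2
    constructor
    · obtain ⟨z, hz, h3, h4⟩ := ((Γ.frequently_above s t').and_eventually
        (h1.and (hfg t' h2))).exists
      rw [← (h3.1 hz).2, (h4.1 hz).2]
    · obtain ⟨z, hz, h3, h4⟩ := ((Γ.frequently_below s t').and_eventually
        (h1.and (hfg t' h2))).exists
      rw [← (h3.2 hz).2, (h4.2 hz).2]
  obtain ⟨t₀, ht₀⟩ : (Γ.span s).Nonempty := Γ.span_nonempty s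
  refine ⟨f t₀, g t₀, fun t ht => ?_⟩
  rw [hpre.eq_of_eventually_eq (fun t ht => (hloc t ht).mono fun _ h => h.1) ht₀ ht,
    hpre.eq_of_eventually_eq (fun t ht => (hloc t ht).mono fun _ h => h.2) ht₀ ht]
  exact hfg t ht

/-- The face above a segment. -/
noncomputable def upper [Finite S] (s : S) : Set ℂ := (Γ.exists_sides s).choose

/-- The face below a segment. -/
noncomputable def lower [Finite S] (s : S) : Set ℂ := (Γ.exists_sides s).choose_spec.choose

theorem eventually_sides [Finite S] (s : S) {t : ℝ} (ht : t ∈ Γ.span s) :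
    ∀ᶠ z in 𝓝 (⟨t, Γ.height s t⟩ : ℂ),
      (Γ.height s z.re < z.im → z ∉ Γ.support ∧ Γ.face z = Γ.upper s) ∧
      (z.im < Γ.height s z.re → z ∉ Γ.support ∧ Γ.face z = Γ.lower s) :=
  (Γ.exists_sides s).choose_spec.choose_spec t ht

theorem exists_upper [Finite S] (s : S) : ∃ z ∉ Γ.support, Γ.face z = Γ.upper s := by
  obtain ⟨t, ht⟩ := Γ.span_nonempty s
  obtain ⟨z, hz, h⟩ := ((Γ.frequently_above s t).and_eventually (Γ.eventually_sides s ht)).exists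
  exact ⟨z, h.1 hz⟩

theorem exists_lower [Finite S] (s : S) : ∃ z ∉ Γ.support, Γ.face z = Γ.lower s := by
  obtain ⟨t, ht⟩ := Γ.span_nonempty s
  obtain ⟨z, hz, h⟩ := ((Γ.frequently_below s t).and_eventually (Γ.eventually_sides s ht)).exists
  exact ⟨z, h.2 hz⟩

theorem seg_subset_closure_span (s : S) :
    Γ.seg s ⊆ closure ((fun t : ℝ => (⟨t, Γ.height s t⟩ : ℂ)) '' Γ.span s) := by
  intro z hz
  have h : z.re ∈ closure (Γ.span s) := by
    rw [span, Set.uIoo, closure_Ioo (inf_lt_sup.2 (Γ.re_ne s)).ne]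
    exact ((Γ.mem_seg_iff s z).1 hz).1
  exact image_closure_subset_closure_image (Γ.continuous_point s) ⟨_, h, Γ.point_eq hz⟩

theorem seg_subset_closure_upper [Finite S] (s : S) : Γ.seg s ⊆ closure (Γ.upper s) := by
  refine (Γ.seg_subset_closure_span s).trans (closure_minimal ?_ isClosed_closure)
  rintro _ ⟨t, ht, rfl⟩
  rw [mem_closure_iff_frequently]
  refine ((Γ.frequently_above s t).and_eventually (Γ.eventually_sides s ht)).mono ?_
  rintro z ⟨hz, h⟩
  rw [← (h.1 hz).2]
  exact Γ.mem_face (h.1 hz).1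

theorem seg_subset_closure_lower [Finite S] (s : S) : Γ.seg s ⊆ closure (Γ.lower s) := by
  refine (Γ.seg_subset_closure_span s).trans (closure_minimal ?_ isClosed_closure)
  rintro _ ⟨t, ht, rfl⟩
  rw [mem_closure_iff_frequently]
  refine ((Γ.frequently_below s t).and_eventually (Γ.eventually_sides s ht)).mono ?_
  rintro z ⟨hz, h⟩
  rw [← (h.2 hz).2]
  exact Γ.mem_face (h.2 hz).1

/-- A function of faces without jumps across the segments that meet an open preconnected set
without nodes is constant there. -/
theorem eq_of_no_jump [Finite S] {α : Type*} (φ : Set ℂ → α) {O : Set ℂ} (hO : IsPreconnected O)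
    (hOo : IsOpen O) (hn : Disjoint O Γ.nodes)
    (hj : ∀ s, (Γ.seg s ∩ O).Nonempty → φ (Γ.upper s) = φ (Γ.lower s))
    {z z' : ℂ} (hz : z ∈ O) (hz' : z' ∈ O) (hzs : z ∉ Γ.support) (hzs' : z' ∉ Γ.support) :
    φ (Γ.face z) = φ (Γ.face z') := by
  refine hO.eq_of_locally_const_off hOo Γ.dense_compl_support (g := fun z => φ (Γ.face z)) ?_
    hz hz' hzs hzs'
  intro w hw
  by_cases hws : w ∈ Γ.support
  · rcases hws with h | h
    · exact (Set.disjoint_left.1 hn hw h).elim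
    obtain ⟨s, hs⟩ := Set.mem_iUnion.1 h
    have ht := Γ.re_mem_span hs (Set.disjoint_left.1 hn hw)
    refine ⟨φ (Γ.upper s), ?_⟩
    have hev := Γ.eventually_sides s ht
    rw [Γ.point_eq hs] at hev
    filter_upwards [hev, (Complex.continuous_re.tendsto w).eventually
      ((Γ.isOpen_span s).mem_nhds ht)] with y hy hre hys
    rcases lt_trichotomy y.im (Γ.height s y.re) with h | h | h
    · rw [(hy.2 h).2, hj s ⟨w, hs, hw⟩]
    · exact (hys (Γ.seg_subset_support s ((Γ.mem_seg_iff s y).2 ⟨Γ.span_subset s hre, h⟩))).elim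
    · rw [(hy.1 h).2]
  · exact ⟨φ (Γ.face w), (Γ.eventually_face_eq hws).mono fun y hy _ => by rw [hy]⟩

theorem isPreconnected_compl_nodes : IsPreconnected Γ.nodesᶜ :=
  (Γ.nodes_finite.countable.isConnected_compl_of_one_lt_rank (by simp)).isPreconnected

/-- A function of faces without jumps is constant. -/
theorem eq_of_no_jump_univ [Finite S] {α : Type*} (φ : Set ℂ → α)
    (hj : ∀ s, φ (Γ.upper s) = φ (Γ.lower s)) {z z' : ℂ} (hzs : z ∉ Γ.support)
    (hzs' : z' ∉ Γ.support) : φ (Γ.face z) = φ (Γ.face z') :=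
  Γ.eq_of_no_jump φ Γ.isPreconnected_compl_nodes Γ.nodes_finite.isClosed.isOpen_compl
    disjoint_compl_left (fun s _ => hj s) (fun h => hzs (Or.inl h)) (fun h => hzs' (Or.inl h))
    hzs hzs'

/-- The set of faces. -/
def faces : Set (Set ℂ) := {f | ∃ z ∉ Γ.support, Γ.face z = f}

theorem finite_faces [Finite S] : Γ.faces.Finite := by
  classical
  obtain ⟨z₀, hz₀⟩ : (Γ.supportᶜ).Nonempty := Γ.dense_compl_support.nonempty
  refine (((Set.finite_range Γ.upper).union (Set.finite_range Γ.lower)).union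
    (Set.finite_singleton (Γ.face z₀))).subset ?_
  rintro f ⟨z, hz, rfl⟩
  by_contra hcon
  simp only [Set.mem_union, Set.mem_range, Set.mem_singleton_iff, not_or, not_exists] at hcon
  have := Γ.eq_of_no_jump_univ (fun f => f = Γ.face z)
    (fun s => propext (iff_of_false (hcon.1.1 s) (hcon.1.2 s))) hz hz₀
  exact hcon.2 (this.mp rfl).symm

theorem upper_mem_faces [Finite S] (s : S) : Γ.upper s ∈ Γ.faces := Γ.exists_upper s

theorem lower_mem_faces [Finite S] (s : S) : Γ.lower s ∈ Γ.faces := Γ.exists_lower s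

theorem exists_extension {α : Type*} [Nonempty α] (φ : Γ.faces → α) :
    ∃ ψ : Set ℂ → α, ∀ f (hf : f ∈ Γ.faces), φ ⟨f, hf⟩ = ψ f := by
  classical
  exact ⟨fun f => if hf : f ∈ Γ.faces then φ ⟨f, hf⟩ else Classical.arbitrary α,
    fun f hf => by simp [hf]⟩

end SegmentGraph

/-- The set of points whose distance to `w` lies in an interval of positive numbers is
preconnected. -/
theorem isPreconnected_setOf_norm_sub_mem (w : ℂ) {I : Set ℝ} (hI : IsPreconnected I)
    (hpos : ∀ r ∈ I, 0 < r) : IsPreconnected {z : ℂ | ‖z - w‖ ∈ I} := by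
  have : {z : ℂ | ‖z - w‖ ∈ I} =
      (fun q : ℝ × ℝ => w + q.1 * Complex.exp (q.2 * Complex.I)) '' (I ×ˢ Set.univ) := by
    ext z
    constructor
    · intro hz
      refine ⟨(‖z - w‖, Complex.arg (z - w)), ⟨hz, trivial⟩, ?_⟩
      simp [Complex.norm_mul_exp_arg_mul_I]
    · rintro ⟨⟨r, θ⟩, ⟨hr, -⟩, rfl⟩
      simpa [Complex.norm_exp_ofReal_mul_I, abs_of_pos (hpos r hr)] using hr
  rw [this]
  exact (hI.prod isPreconnected_univ).image _ (by fun_prop)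

namespace SegmentGraph

variable {S : Type*} (Γ : SegmentGraph S)

/-- The indicator of a proposition with values in `ZMod 2`. -/
noncomputable def ind (P : Prop) : ZMod 2 := by classical exact if P then 1 else 0

theorem ind_true {P : Prop} (h : P) : ind P = 1 := by simp [ind, h]

theorem ind_false {P : Prop} (h : ¬ P) : ind P = 0 := by simp [ind, h]

theorem ind_congr {P Q : Prop} (h : P ↔ Q) : ind P = ind Q := by rw [propext h]

theorem zmod_two_add_self (a : ZMod 2) : a + a = 0 := CharTwo.add_self_eq_zero a

theorem eventually_ind_lt {y h : ℝ → ℝ} {a : ℝ} (hy : ContinuousAt y a) (hh : ContinuousAt h a)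
    (hne : y a ≠ h a) : ∀ᶠ t in 𝓝 a, ind (y t < h t) = ind (y a < h a) := by
  rcases hne.lt_or_gt with H | H
  · filter_upwards [hy.eventually_lt hh H] with t ht
    rw [ind_true ht, ind_true H]
  · filter_upwards [hh.eventually_lt hy H] with t ht
    rw [ind_false ht.not_gt, ind_false H.not_gt]

/-- The indicator of the interval between the endpoints of a segment. -/
noncomputable def cover (s : S) (t : ℝ) : ZMod 2 :=
  ind ((Γ.fst s).re ≤ t) + ind ((Γ.snd s).re ≤ t)

/-- The number of endpoints of a segment with a given abscissa. -/
noncomputable def ends (s : S) (t : ℝ) : ZMod 2 :=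
  ind ((Γ.fst s).re = t) + ind ((Γ.snd s).re = t)

theorem cover_of_mem_span {s : S} {t : ℝ} (ht : t ∈ Γ.span s) : Γ.cover s t = 1 := by
  rw [span, Set.uIoo, Set.mem_Ioo, inf_lt_iff, lt_sup_iff] at ht
  unfold cover ind
  split_ifs <;> first | rfl | grind

theorem cover_of_notMem {s : S} {t : ℝ} (ht : t ∉ Set.uIcc (Γ.fst s).re (Γ.snd s).re) :
    Γ.cover s t = 0 := by
  rw [Set.mem_uIcc] at ht
  unfold cover ind
  split_ifs <;> first | rfl | grind

theorem ends_eq_zero {s : S} {t : ℝ} (h1 : (Γ.fst s).re ≠ t) (h2 : (Γ.snd s).re ≠ t) :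
    Γ.ends s t = 0 := by
  simp [ends, ind_false h1, ind_false h2]

/-- Just after an abscissa the cover does not change. -/
theorem eventually_cover (s : S) (t₀ : ℝ) : ∀ᶠ t in 𝓝 t₀,
    Γ.cover s t = (ind ((Γ.fst s).re < t₀) + ind ((Γ.snd s).re < t₀)) +
      Γ.ends s t₀ * ind (t₀ ≤ t) := by
  have key : ∀ a : ℝ, ∀ᶠ t in 𝓝 t₀, ind (a ≤ t) = ind (a < t₀) + ind (a = t₀) * ind (t₀ ≤ t) := by
    intro a
    rcases lt_trichotomy a t₀ with h | h | h
    · filter_upwards [lt_mem_nhds h] with t ht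
      simp [ind_true h, ind_true (le_of_lt ht), ind_false h.ne]
    · subst h; simp [ind]
    · filter_upwards [gt_mem_nhds h] with t ht
      simp [ind_false h.not_gt, ind_false (not_le_of_gt ht), ind_false h.ne']
  filter_upwards [key (Γ.fst s).re, key (Γ.snd s).re] with t h1 h2
  rw [cover, h1, h2, ends]; ring

/-- The number of segments of a chain above a point. -/
noncomputable def winding [Fintype S] (x : S → ZMod 2) (p : ℂ) : ZMod 2 :=
  ∑ s, x s * Γ.cover s p.re * ind (p.im < Γ.height s p.re)

theorem eventually_below (s : S) {p : ℂ} (h : p.im ≠ Γ.height s p.re) :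
    ∀ᶠ q in 𝓝 p, ind (q.im < Γ.height s q.re) = ind (p.im < Γ.height s p.re) := by
  have hc : Continuous fun q : ℂ => Γ.height s q.re :=
    (Γ.continuous_height s).comp Complex.continuous_re
  rcases h.lt_or_gt with H | H
  · filter_upwards [Complex.continuous_im.continuousAt.eventually_lt hc.continuousAt H] with q hq
    rw [ind_true hq, ind_true H]
  · filter_upwards [hc.continuousAt.eventually_lt Complex.continuous_im.continuousAt H] with q hq
    rw [ind_false (not_lt_of_gt hq), ind_false (not_lt_of_gt H)]

/-- If a cycle does not pass through `p`, its winding function is constant near `p`. -/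
theorem eventually_winding_eq [Fintype S] {x : S → ZMod 2} (hx : ∀ t, ∑ s, x s * Γ.ends s t = 0)
    {p : ℂ} (hp : ∀ s, p ∈ Γ.seg s → x s = 0) :
    ∀ᶠ q in 𝓝 p, Γ.winding x q = Γ.winding x p := by
  suffices H : ∃ c, ∀ᶠ q in 𝓝 p, Γ.winding x q = c by
    obtain ⟨c, hc⟩ := H
    filter_upwards [hc] with q hq
    rw [hq, hc.self_of_nhds]
  refine ⟨∑ s, x s * (ind ((Γ.fst s).re < p.re) + ind ((Γ.snd s).re < p.re)) *
    ind (p.im < Γ.height s p.re), ?_⟩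
  have hB : ∃ B : ZMod 2, ∀ s, Γ.ends s p.re ≠ 0 → ind (p.im < Γ.height s p.re) = B := by
    by_cases h : ∃ w ∈ Γ.nodes, w.re = p.re
    · obtain ⟨w, hw, hwp⟩ := h
      refine ⟨ind (p.im < w.im), fun s hs => ?_⟩
      by_cases h1 : (Γ.fst s).re = p.re
      · have : Γ.fst s = w := Γ.re_injOn (Γ.fst_mem s) hw (h1.trans hwp.symm)
        rw [← h1, Γ.height_fst, this]
      by_cases h2 : (Γ.snd s).re = p.re
      · have : Γ.snd s = w := Γ.re_injOn (Γ.snd_mem s) hw (h2.trans hwp.symm)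
        rw [← h2, Γ.height_snd, this]
      exact (hs (Γ.ends_eq_zero h1 h2)).elim
    · refine ⟨0, fun s hs => (hs (Γ.ends_eq_zero ?_ ?_)).elim⟩
      · exact fun h' => h ⟨_, Γ.fst_mem s, h'⟩
      · exact fun h' => h ⟨_, Γ.snd_mem s, h'⟩
  obtain ⟨B, hB⟩ := hB
  have hterm : ∀ s, ∀ᶠ q in 𝓝 p, x s * Γ.cover s q.re * ind (q.im < Γ.height s q.re) =
      x s * (ind ((Γ.fst s).re < p.re) + ind ((Γ.snd s).re < p.re)) *
        ind (p.im < Γ.height s p.re) + x s * Γ.ends s p.re * (B * ind (p.re ≤ q.re)) := by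
    intro s
    by_cases hxs : x s = 0
    · simp [hxs]
    have hre := (Complex.continuous_re.tendsto p).eventually (Γ.eventually_cover s p.re)
    by_cases hmem : p.re ∈ Set.uIcc (Γ.fst s).re (Γ.snd s).re
    · have hne : p.im ≠ Γ.height s p.re := fun h => hxs (hp s ((Γ.mem_seg_iff s p).2 ⟨hmem, h⟩))
      filter_upwards [hre, Γ.eventually_below s hne] with q h1 h2
      rw [h1, h2]
      by_cases h0 : Γ.ends s p.re = 0
      · simp [h0]
      · rw [hB s h0]; ring
    · have h0 : Γ.ends s p.re = 0 := Γ.ends_eq_zero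
        (fun h => hmem (h ▸ Set.left_mem_uIcc)) (fun h => hmem (h ▸ Set.right_mem_uIcc))
      have hC : ind ((Γ.fst s).re < p.re) + ind ((Γ.snd s).re < p.re) = 0 := by
        rw [Set.mem_uIcc] at hmem
        unfold ind
        split_ifs <;> first | rfl | grind
      filter_upwards [hre] with q h1
      rw [h1, h0, hC]; simp
  filter_upwards [eventually_all.2 hterm] with q hq
  rw [winding, Finset.sum_congr rfl fun s _ => hq s, Finset.sum_add_distrib, ← Finset.sum_mul,
    hx, zero_mul, add_zero]

theorem eventually_winding_jump [Fintype S] (x : S → ZMod 2) (s : S) {t : ℝ}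
    (ht : t ∈ Γ.span s) : ∀ᶠ ε in 𝓝[>] (0 : ℝ),
      Γ.winding x ⟨t, Γ.height s t + ε⟩ + Γ.winding x ⟨t, Γ.height s t - ε⟩ = x s := by
  classical
  have hterm : ∀ s', ∀ᶠ ε in 𝓝[>] (0 : ℝ),
      x s' * Γ.cover s' t * ind (Γ.height s t + ε < Γ.height s' t) +
      x s' * Γ.cover s' t * ind (Γ.height s t - ε < Γ.height s' t) =
        if s' = s then x s else 0 := by
    intro s'
    by_cases hs : s' = s
    · subst hs
      filter_upwards [self_mem_nhdsWithin] with ε hε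
      have hε : 0 < ε := hε
      rw [ind_false (by linarith), ind_true (by linarith), Γ.cover_of_mem_span ht]
      simp
    · rw [if_neg hs]
      by_cases hmem : t ∈ Set.uIcc (Γ.fst s').re (Γ.snd s').re
      · have hne : Γ.height s t ≠ Γ.height s' t := fun h =>
          Γ.point_notMem_nodes s ht (Γ.inter hs _ ((Γ.mem_seg_iff s' _).2 ⟨hmem, h⟩)
            (Γ.point_mem_seg s ht))
        have h1 := eventually_ind_lt (y := fun ε => Γ.height s t + ε)
          (h := fun _ => Γ.height s' t) (a := 0) (by fun_prop) (by fun_prop) (by simpa using hne)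
        have h2 := eventually_ind_lt (y := fun ε => Γ.height s t - ε)
          (h := fun _ => Γ.height s' t) (a := 0) (by fun_prop) (by fun_prop) (by simpa using hne)
        filter_upwards [nhdsWithin_le_nhds h1, nhdsWithin_le_nhds h2] with ε e1 e2
        rw [e1, e2]; simp only [add_zero, sub_zero]
        exact zmod_two_add_self _
      · simp [Γ.cover_of_notMem hmem]
  filter_upwards [eventually_all.2 hterm] with ε hε
  simp only [winding, ← Finset.sum_add_distrib]
  rw [Finset.sum_congr rfl fun s' _ => hε s']
  simp

/-- Every cycle of segments is the set of jumps of a function of the faces, which does not change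
near points off the cycle. -/
theorem exists_potential [Fintype S] {x : S → ZMod 2} (hx : ∀ t, ∑ s, x s * Γ.ends s t = 0) :
    ∃ φ : Set ℂ → ZMod 2, (∀ s, φ (Γ.upper s) + φ (Γ.lower s) = x s) ∧
      ∀ p, (∀ s, p ∈ Γ.seg s → x s = 0) → ∀ f ∈ Γ.faces, ∀ g ∈ Γ.faces,
        p ∈ closure f → p ∈ closure g → φ f = φ g := by
  classical
  let φ : Set ℂ → ZMod 2 := fun f =>
    if h : ∃ z ∉ Γ.support, Γ.face z = f then Γ.winding x h.choose else 0
  have hφ : ∀ z ∉ Γ.support, φ (Γ.face z) = Γ.winding x z := by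
    intro z hz
    have h : ∃ z' ∉ Γ.support, Γ.face z' = Γ.face z := ⟨z, hz, rfl⟩
    simp only [φ, dif_pos h]
    obtain ⟨h1, h2⟩ := h.choose_spec
    refine (isPreconnected_connectedComponentIn (F := Γ.supportᶜ) (x := z)).eq_of_eventually_eq
      (f := Γ.winding x) ?_ ?_ (Γ.mem_face hz)
    · intro y hy
      refine nhdsWithin_le_nhds (Γ.eventually_winding_eq hx fun s hs => ?_)
      exact (Γ.face_subset z hy (Γ.seg_subset_support s hs)).elim
    · have := Γ.mem_face h1
      rwa [h2] at this
  refine ⟨φ, fun s => ?_, ?_⟩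
  · obtain ⟨t, ht⟩ := Γ.span_nonempty s
    have t1 : Tendsto (fun ε : ℝ => (⟨t, Γ.height s t + ε⟩ : ℂ)) (𝓝[>] 0)
        (𝓝 ⟨t, Γ.height s t⟩) := by
      have := ((continuous_mk_im t).comp (continuous_const_add (Γ.height s t))).tendsto 0
      simp only [Function.comp_apply, add_zero] at this
      exact this.mono_left nhdsWithin_le_nhds
    have t2 : Tendsto (fun ε : ℝ => (⟨t, Γ.height s t - ε⟩ : ℂ)) (𝓝[>] 0)
        (𝓝 ⟨t, Γ.height s t⟩) := by
      have := ((continuous_mk_im t).comp (continuous_sub_left (Γ.height s t))).tendsto 0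
      simp only [Function.comp_apply, sub_zero] at this
      exact this.mono_left nhdsWithin_le_nhds
    obtain ⟨ε, h1, h2, h3, hε⟩ := ((Γ.eventually_winding_jump x s ht).and
      ((t1.eventually (Γ.eventually_sides s ht)).and
        ((t2.eventually (Γ.eventually_sides s ht)).and self_mem_nhdsWithin))).exists
    have hε : 0 < ε := hε
    have a1 := h2.1 (by simp only; linarith)
    have a2 := h3.2 (by simp only; linarith)
    rw [← h1, ← a1.2, ← a2.2, hφ _ a1.1, hφ _ a2.1]
  · have aux : ∀ p, (∀ s, p ∈ Γ.seg s → x s = 0) → ∀ f ∈ Γ.faces, p ∈ closure f →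
        φ f = Γ.winding x p := by
      rintro p hp f ⟨z, hz, rfl⟩ hpf
      obtain ⟨q, hq, hq'⟩ := ((mem_closure_iff_frequently.1 hpf).and_eventually
        (Γ.eventually_winding_eq hx hp)).exists
      rw [← hq', ← hφ q (Γ.face_subset z hq), Γ.face_eq_of_mem hq]
    intro p hp f hf g hg hpf hpg
    rw [aux p hp f hf hpf, aux p hp g hg hpg]

/-- Points far from the origin lie in one face. -/
theorem exists_outer_face [Finite S] :
    ∃ R : ℝ, ∃ f : Set ℂ, ∀ z : ℂ, R < ‖z‖ → z ∉ Γ.support ∧ Γ.face z = f := by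
  obtain ⟨R, hR⟩ := Γ.bounded_support
  have hpre := isPreconnected_setOf_norm_sub_mem 0 (I := Set.Ioi |R|) isPreconnected_Ioi
    fun r hr => (abs_nonneg R).trans_lt hr
  simp only [sub_zero, Set.mem_Ioi] at hpre
  have hoff : ∀ z : ℂ, |R| < ‖z‖ → z ∉ Γ.support := fun z hz hs =>
    absurd (hR z hs) (not_le.2 ((le_abs_self R).trans_lt hz))
  refine ⟨|R|, Γ.face ((|R| + 1 : ℝ) : ℂ), fun z hz => ⟨hoff z hz, ?_⟩⟩
  refine Γ.face_eq_of_preconnected hpre (fun z hz => hoff z hz) hz ?_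
  simp only [Set.mem_ofPred_eq, Complex.norm_real, Real.norm_eq_abs]
  rw [abs_of_nonneg (by positivity : (0 : ℝ) ≤ |R| + 1)]
  linarith

/-- The jump of a function of the faces across a segment. -/
noncomputable def jump [Finite S] (ψ : Set ℂ → ZMod 2) (s : S) : ZMod 2 :=
  ψ (Γ.upper s) + ψ (Γ.lower s)

/-- Along a vertical line without nodes the jumps add up to zero. -/
theorem sum_jump_line [Fintype S] (ψ : Set ℂ → ZMod 2) {t : ℝ} (ht : ∀ w ∈ Γ.nodes, w.re ≠ t) :
    ∑ s, ind (t ∈ Γ.span s) * Γ.jump ψ s = 0 := by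
  classical
  set D : Set ℝ := {y | (⟨t, y⟩ : ℂ) ∈ Γ.support}
  have hspan : ∀ s y, (⟨t, y⟩ : ℂ) ∈ Γ.seg s → t ∈ Γ.span s ∧ y = Γ.height s t := fun s y h =>
    ⟨Γ.re_mem_span h fun hn => ht _ hn rfl, ((Γ.mem_seg_iff s _).1 h).2⟩
  have hDfin : D.Finite := by
    refine (Set.finite_range fun s => Γ.height s t).subset ?_
    rintro y (h | h)
    · exact (ht _ h rfl).elim
    · obtain ⟨s, hs⟩ := Set.mem_iUnion.1 h
      exact ⟨s, (hspan s y hs).2.symm⟩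
  have hterm : ∀ s y, (t ∈ Γ.span s → y ≠ Γ.height s t) → ∀ᶠ y' in 𝓝 y,
      ind (t ∈ Γ.span s) * Γ.jump ψ s * ind (y' < Γ.height s t) =
        ind (t ∈ Γ.span s) * Γ.jump ψ s * ind (y < Γ.height s t) := by
    intro s y h
    by_cases hs : t ∈ Γ.span s
    · filter_upwards [eventually_ind_lt (y := fun y => y) (h := fun _ => Γ.height s t) (a := y)
        (by fun_prop) (by fun_prop) (h hs)] with y' hy'
      rw [hy']
    · simp [ind_false hs]
  have key : ∀ y₁ y₂, y₁ ∉ D → y₂ ∉ D →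
      ψ (Γ.face ⟨t, y₁⟩) + ∑ s, ind (t ∈ Γ.span s) * Γ.jump ψ s * ind (y₁ < Γ.height s t) =
      ψ (Γ.face ⟨t, y₂⟩) + ∑ s, ind (t ∈ Γ.span s) * Γ.jump ψ s * ind (y₂ < Γ.height s t) := by
    intro y₁ y₂ h₁ h₂
    refine isPreconnected_univ.eq_of_locally_const_off isOpen_univ (D := D)
      (hDfin.countable.dense_compl ℝ) (g := fun y => ψ (Γ.face ⟨t, y⟩) +
        ∑ s, ind (t ∈ Γ.span s) * Γ.jump ψ s * ind (y < Γ.height s t)) ?_ trivial trivial h₁ h₂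
    intro y _
    by_cases hy : y ∈ D
    · obtain ⟨s₀, hs₀⟩ : ∃ s, (⟨t, y⟩ : ℂ) ∈ Γ.seg s := by
        rcases hy with h | h
        · exact (ht _ h rfl).elim
        · exact Set.mem_iUnion.1 h
      obtain ⟨hsp, rfl⟩ := hspan s₀ y hs₀
      have hev := ((continuous_mk_im t).tendsto (Γ.height s₀ t)).eventually
        (Γ.eventually_sides s₀ hsp)
      have hoth : ∀ s, ∀ᶠ y' in 𝓝 (Γ.height s₀ t), s ∈ Finset.univ.erase s₀ →
          ind (t ∈ Γ.span s) * Γ.jump ψ s * ind (y' < Γ.height s t) =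
          ind (t ∈ Γ.span s) * Γ.jump ψ s * ind (Γ.height s₀ t < Γ.height s t) := by
        intro s
        by_cases hs : s = s₀
        · simp [hs]
        · filter_upwards [hterm s (Γ.height s₀ t) fun hsp' heq =>
            Γ.point_notMem_nodes s₀ hsp (Γ.inter hs _ (by
              rw [heq]; exact Γ.point_mem_seg s hsp') hs₀)] with y' hy' _ using hy'
      refine ⟨ψ (Γ.upper s₀) + ∑ s ∈ Finset.univ.erase s₀,
        ind (t ∈ Γ.span s) * Γ.jump ψ s * ind (Γ.height s₀ t < Γ.height s t), ?_⟩
      filter_upwards [hev, eventually_all.2 hoth] with y' h1 h2 h3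
      rw [← Finset.add_sum_erase _ _ (Finset.mem_univ s₀), Finset.sum_congr rfl h2, ← add_assoc]
      congr 1
      rcases lt_trichotomy y' (Γ.height s₀ t) with h | h | h
      · rw [(h1.2 h).2, ind_true h, ind_true hsp, jump]
        linear_combination zmod_two_add_self (ψ (Γ.lower s₀))
      · subst h; exact (h3 hy).elim
      · rw [(h1.1 h).2, ind_false h.not_gt]; simp
    · refine ⟨ψ (Γ.face ⟨t, y⟩) + ∑ s, ind (t ∈ Γ.span s) * Γ.jump ψ s * ind (y < Γ.height s t), ?_⟩
      filter_upwards [((continuous_mk_im t).tendsto y).eventually (Γ.eventually_face_eq hy),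
        eventually_all.2 fun s => hterm s y fun hs h => hy (by
          rw [h]; exact Γ.seg_subset_support s (Γ.point_mem_seg s hs))] with y' h1 h2 _
      rw [h1, Finset.sum_congr rfl fun s _ => h2 s]
  obtain ⟨R, f, hR⟩ := Γ.exists_outer_face
  obtain ⟨M, hM⟩ : ∃ M : ℝ, ∀ s, |Γ.height s t| < M := by
    obtain ⟨M, hM⟩ := (Set.finite_range fun s => |Γ.height s t|).bddAbove
    exact ⟨M + 1, fun s => (hM ⟨s, rfl⟩).trans_lt (by linarith)⟩
  set Y := max M (R + 1)
  have hY1 : ∀ s, |Γ.height s t| < Y := fun s => (hM s).trans_le (le_max_left _ _)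
  have hY2 : R < |Y| := (lt_add_one R).trans_le ((le_max_right _ _).trans (le_abs_self _))
  have a1 := hR ⟨t, Y⟩ (hY2.trans_le (Complex.abs_im_le_norm ⟨t, Y⟩))
  have a2 := hR ⟨t, -Y⟩ ((abs_neg Y).symm ▸ hY2 |>.trans_le (Complex.abs_im_le_norm ⟨t, -Y⟩))
  have := key (-Y) Y a2.1 a1.1
  rw [a1.2, a2.2, add_right_inj] at this
  have e1 : ∀ s, ind (-Y < Γ.height s t) = 1 := fun s => ind_true (abs_lt.1 (hY1 s)).1
  have e2 : ∀ s, ind (Y < Γ.height s t) = 0 := fun s => ind_false (abs_lt.1 (hY1 s)).2.not_gt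
  simpa [e1, e2] using this

/-- The jumps of a function of the faces form a cycle. -/
theorem sum_jump_ends [Fintype S] (ψ : Set ℂ → ZMod 2) (t : ℝ) :
    ∑ s, Γ.jump ψ s * Γ.ends s t = 0 := by
  have hN : ∀ᶠ t' in 𝓝[≠] t, ∀ w ∈ Γ.nodes, w.re ≠ t' := by
    have hc := ((Γ.nodes_finite.image Complex.re).subset
      (Set.sdiff_subset (t := {t}))).isClosed.isOpen_compl
    filter_upwards [nhdsWithin_le_nhds (hc.mem_nhds (by simp)), self_mem_nhdsWithin]
      with t' h1 h2 w hw h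
    exact h1 ⟨⟨w, hw, h⟩, h2⟩
  have hside : ∀ s, (∀ᶠ t' in 𝓝[>] t, ind (t' ∈ Γ.span s) =
      ind ((Γ.fst s).re ≤ t) + ind ((Γ.snd s).re ≤ t)) ∧
      ∀ᶠ t' in 𝓝[<] t, ind (t' ∈ Γ.span s) = ind ((Γ.fst s).re < t) + ind ((Γ.snd s).re < t) := by
    intro s
    have hlt : ∀ a : ℝ, ∀ᶠ t' in 𝓝[>] t, (a < t' ↔ a ≤ t) ∧ (t' < a ↔ t < a) := by
      intro a
      rcases le_or_gt a t with h | h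
      · filter_upwards [self_mem_nhdsWithin] with t' (h' : t < t')
        grind
      · filter_upwards [self_mem_nhdsWithin, nhdsWithin_le_nhds (gt_mem_nhds h)]
          with t' (h' : t < t') (h'' : t' < a)
        grind
    have hgt : ∀ a : ℝ, ∀ᶠ t' in 𝓝[<] t, (a < t' ↔ a < t) ∧ (t' < a ↔ t ≤ a) := by
      intro a
      rcases le_or_gt t a with h | h
      · filter_upwards [self_mem_nhdsWithin] with t' (h' : t' < t)
        grind
      · filter_upwards [self_mem_nhdsWithin, nhdsWithin_le_nhds (lt_mem_nhds h)]
          with t' (h' : t' < t) (h'' : a < t')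
        grind
    constructor
    · filter_upwards [hlt (Γ.fst s).re, hlt (Γ.snd s).re] with t' h1 h2
      rw [span, Set.uIoo, Set.mem_Ioo, inf_lt_iff, lt_sup_iff, h1.1, h1.2, h2.1, h2.2]
      unfold ind
      split_ifs <;> first | rfl | grind
    · filter_upwards [hgt (Γ.fst s).re, hgt (Γ.snd s).re] with t' h1 h2
      rw [span, Set.uIoo, Set.mem_Ioo, inf_lt_iff, lt_sup_iff, h1.1, h1.2, h2.1, h2.2]
      unfold ind
      split_ifs <;> first | rfl | grind
  have r1 : ∑ s, (ind ((Γ.fst s).re ≤ t) + ind ((Γ.snd s).re ≤ t)) * Γ.jump ψ s = 0 := by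
    obtain ⟨t', h1, h2⟩ := ((hN.filter_mono (nhdsGT_le_nhdsNE t)).and
      (eventually_all.2 fun s => (hside s).1)).exists
    rw [← Γ.sum_jump_line ψ h1]
    exact Finset.sum_congr rfl fun s _ => by rw [h2]
  have r2 : ∑ s, (ind ((Γ.fst s).re < t) + ind ((Γ.snd s).re < t)) * Γ.jump ψ s = 0 := by
    obtain ⟨t', h1, h2⟩ := ((hN.filter_mono (nhdsLT_le_nhdsNE t)).and
      (eventually_all.2 fun s => (hside s).2)).exists
    rw [← Γ.sum_jump_line ψ h1]
    exact Finset.sum_congr rfl fun s _ => by rw [h2]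
  have key : ∀ a : ℝ, ind (a = t) = ind (a ≤ t) + ind (a < t) := by
    intro a
    unfold ind
    split_ifs <;> first | rfl | grind
  rw [← add_zero (0 : ZMod 2)]
  nth_rewrite 2 [← r1]
  rw [← r2, ← Finset.sum_add_distrib]
  refine Finset.sum_congr rfl fun s _ => ?_
  rw [ends, key, key]; ring

/-- Near a node the plane graph is a cone. -/
theorem exists_cone [Finite S] {w : ℂ} (hw : w ∈ Γ.nodes) : ∃ r > 0,
    (∀ z ∈ Metric.ball w r, z ∈ Γ.nodes → z = w) ∧
    (∀ z ∈ Metric.ball w r, ∀ s, z ∈ Γ.seg s → w ∈ Γ.seg s) ∧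
    ∀ z ∈ Metric.ball w r, z ∉ Γ.support → ∀ c : ℝ, 0 < c → c ≤ 1 →
      w + c • (z - w) ∉ Γ.support := by
  have hK : IsClosed ((Γ.nodes \ {w}) ∪ ⋃ s : {s // w ∉ Γ.seg s}, Γ.seg s) :=
    (Γ.nodes_finite.subset Set.sdiff_subset).isClosed.union
      (isClosed_iUnion_of_finite fun s => Γ.isClosed_seg s)
  obtain ⟨r, hr, hball⟩ := Metric.isOpen_iff.1 hK.isOpen_compl w (by
    rintro (h | h)
    · exact h.2 rfl
    · obtain ⟨⟨s, hs⟩, h⟩ := Set.mem_iUnion.1 h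
      exact hs h)
  have h1 : ∀ z ∈ Metric.ball w r, z ∈ Γ.nodes → z = w := fun z hz hn => by
    by_contra hne
    exact hball hz (Or.inl ⟨hn, hne⟩)
  have h2 : ∀ z ∈ Metric.ball w r, ∀ s, z ∈ Γ.seg s → w ∈ Γ.seg s := fun z hz s hs => by
    by_contra hne
    exact hball hz (Or.inr (Set.mem_iUnion.2 ⟨⟨s, hne⟩, hs⟩))
  refine ⟨r, hr, h1, h2, fun z hz hzs c hc hc1 hmem => ?_⟩
  have hzw : z ≠ w := fun h => hzs (Or.inl (h ▸ hw))
  have hb : w + c • (z - w) ∈ Metric.ball w r := by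
    rw [Metric.mem_ball, dist_eq_norm] at hz ⊢
    rw [add_sub_cancel_left, norm_smul, Real.norm_of_nonneg hc.le]
    nlinarith [norm_nonneg (z - w)]
  rcases hmem with h | h
  · have := h1 _ hb h
    simp [hc.ne', sub_eq_zero, hzw] at this
  obtain ⟨s, hs⟩ := Set.mem_iUnion.1 h
  have hws := h2 _ hb s hs
  have aux : ∀ v ∈ Γ.nodes, v ≠ w → w + c • (z - w) ∈ segment ℝ w v → z ∈ segment ℝ w v := by
    intro v hv hvw hseg
    rw [segment_eq_image'] at hseg ⊢
    obtain ⟨d, ⟨hd0, hd1⟩, hd⟩ := hseg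
    have hd : c • (z - w) = d • (v - w) := (add_left_cancel hd).symm
    have hz' : z - w = (d / c) • (v - w) := by
      rw [div_eq_inv_mul, mul_smul, ← hd, smul_smul, inv_mul_cancel₀ hc.ne', one_smul]
    refine ⟨d / c, ⟨by positivity, ?_⟩, by simp only; rw [← hz']; ring⟩
    have hvr : r ≤ ‖v - w‖ := by
      by_contra hlt
      exact hvw (h1 v (by rw [Metric.mem_ball, dist_eq_norm]; linarith) hv)
    have hzr : ‖z - w‖ < r := by rwa [Metric.mem_ball, dist_eq_norm] at hz
    rw [hz', norm_smul, Real.norm_of_nonneg (by positivity)] at hzr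
    by_contra hgt
    nlinarith
  refine hzs (Γ.seg_subset_support s ?_)
  rcases Γ.node_mem w hw s hws with h | h
  · rw [seg, ← h] at hs ⊢
    exact aux _ (Γ.snd_mem s) (fun h' => Γ.fst_ne_snd s (h.symm.trans h'.symm)) hs
  · rw [seg, segment_symm, ← h] at hs ⊢
    exact aux _ (Γ.fst_mem s) (fun h' => Γ.fst_ne_snd s (h'.trans h)) hs

/-- A node on the boundary of a face can be reached from the face along a straight segment. -/
theorem exists_access [Finite S] {w : ℂ} (hw : w ∈ Γ.nodes) {f : Set ℂ} (hf : f ∈ Γ.faces)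
    (hwf : w ∈ closure f) : ∃ p ∈ f, segment ℝ w p ⊆ insert w f := by
  obtain ⟨r, hr, -, -, hcone⟩ := Γ.exists_cone hw
  obtain ⟨q, hq, rfl⟩ := hf
  obtain ⟨p, hpf, hp⟩ := Metric.mem_closure_iff.1 hwf r hr
  rw [_root_.dist_comm] at hp
  refine ⟨p, hpf, ?_⟩
  have hpre : IsPreconnected ((fun c : ℝ => w + c • (p - w)) '' Set.Ioc 0 1) :=
    isPreconnected_Ioc.image _ (by fun_prop)
  have hsub : ((fun c : ℝ => w + c • (p - w)) '' Set.Ioc 0 1) ⊆ Γ.face p := by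
    refine hpre.subset_connectedComponentIn ⟨1, by simp, by simp⟩ ?_
    rintro _ ⟨c, hc, rfl⟩
    exact hcone p hp (Γ.face_subset q hpf) c hc.1 hc.2
  rw [Γ.face_eq_of_mem hpf] at hsub
  rw [segment_eq_image']
  rintro _ ⟨c, hc, rfl⟩
  rcases hc.1.eq_or_lt with h | h
  · subst h; simp
  · exact Or.inr (hsub ⟨c, ⟨h, hc.2⟩, rfl⟩)

/-- If no segment at a node separates different faces, then all faces at that node agree. -/
theorem face_eq_of_node [Finite S] {w : ℂ} (hw : w ∈ Γ.nodes)
    (hs : ∀ s, w ∈ Γ.seg s → Γ.upper s = Γ.lower s) {f g : Set ℂ} (hf : f ∈ Γ.faces)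
    (hg : g ∈ Γ.faces) (hwf : w ∈ closure f) (hwg : w ∈ closure g) : f = g := by
  obtain ⟨r, hr, h1, h2, -⟩ := Γ.exists_cone hw
  have hpre := isPreconnected_setOf_norm_sub_mem w (I := Set.Ioo 0 r) isPreconnected_Ioo
    fun _ h => h.1
  obtain ⟨p, hp, hpw⟩ := Metric.mem_closure_iff.1 hwf r hr
  obtain ⟨q, hq, hqw⟩ := Metric.mem_closure_iff.1 hwg r hr
  obtain ⟨p', -, rfl⟩ := hf
  obtain ⟨q', -, rfl⟩ := hg
  have hmem : ∀ z, dist w z < r → z ∉ Γ.support → z ∈ {z | ‖z - w‖ ∈ Set.Ioo 0 r} := by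
    intro z hz hzs
    rw [_root_.dist_comm, dist_eq_norm] at hz
    exact ⟨norm_pos_iff.2 (sub_ne_zero.2 fun h => hzs (Or.inl (h ▸ hw))), hz⟩
  have hps := Γ.face_subset _ hp
  have hqs := Γ.face_subset _ hq
  rw [← Γ.face_eq_of_mem hp, ← Γ.face_eq_of_mem hq]
  refine Γ.eq_of_no_jump id hpre ?_ ?_ ?_ (hmem p hpw hps) (hmem q hqw hqs) hps hqs
  · exact isOpen_Ioo.preimage (by fun_prop : Continuous fun z : ℂ => ‖z - w‖)
  · refine Set.disjoint_left.2 fun z hz hn => ?_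
    have := h1 z (by rw [Metric.mem_ball, dist_eq_norm]; exact hz.2) hn
    subst this
    simp at hz
  · rintro s ⟨z, hzs, hz⟩
    exact hs s (h2 z (by rw [Metric.mem_ball, dist_eq_norm]; exact hz.2) s hzs)

end SegmentGraph

open SegmentGraph (ind ind_true ind_false ind_congr)

/-- A drawing of a graph in the plane whose edges are simple polygonal lines. -/
structure PolyDrawing (G : SimpleGraph V) where
  /-- The position of a vertex. -/
  vtx : V → ℂ
  /-- The initial vertex of an edge. -/
  src : G.edgeSet → V
  /-- The terminal vertex of an edge. -/
  tgt : G.edgeSet → V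
  /-- The number of segments of an edge. -/
  len : G.edgeSet → ℕ
  /-- The corners of an edge. -/
  pt : G.edgeSet → ℕ → ℂ
  mk_eq : ∀ e, s(src e, tgt e) = e.1
  vtx_inj : Function.Injective vtx
  len_pos : ∀ e, 0 < len e
  pt_zero : ∀ e, pt e 0 = vtx (src e)
  pt_len : ∀ e, pt e (len e) = vtx (tgt e)
  pt_ne_vtx : ∀ e i v, 0 < i → i < len e → pt e i ≠ vtx v
  pt_inj : ∀ e i e' j, 0 < i → i < len e → j ≤ len e' → pt e i = pt e' j → e = e' ∧ i = j
  seg_inter : ∀ e i e' j, i < len e → j < len e' → (e = e' → i ≠ j) →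
    ∀ z ∈ segment ℝ (pt e i) (pt e (i + 1)), z ∈ segment ℝ (pt e' j) (pt e' (j + 1)) →
      z = pt e i ∨ z = pt e (i + 1)
  vtx_mem : ∀ e i v, i < len e → vtx v ∈ segment ℝ (pt e i) (pt e (i + 1)) →
    vtx v = pt e i ∨ vtx v = pt e (i + 1)

/-- Combinatorial data about the faces of a plane drawing of `G`: the faces on the two sides of an
edge, and the vertices on the boundary of a face. -/
structure FaceSystem (G : SimpleGraph V) [Fintype G.edgeSet] (F : Type*) where
  /-- The face on one side of an edge. -/
  left : G.edgeSet → F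
  /-- The face on the other side of an edge. -/
  right : G.edgeSet → F
  /-- The vertex lies on the boundary of the face. -/
  inc : V → F → Prop
  const_of_no_jump : ∀ φ : F → ZMod 2, (∀ e, φ (left e) = φ (right e)) → ∀ f g, φ f = φ g
  exists_potential : ∀ x : G.edgeSet → ZMod 2, (∀ v, ∑ e, x e * ind (v ∈ e.1) = 0) →
    ∃ φ : F → ZMod 2, (∀ e, φ (left e) + φ (right e) = x e) ∧
      ∀ v, (∀ e : G.edgeSet, v ∈ e.1 → x e = 0) → ∀ f g, inc v f → inc v g → φ f = φ g
  sum_jump : ∀ (φ : F → ZMod 2) (v : V), ∑ e, (φ (left e) + φ (right e)) * ind (v ∈ e.1) = 0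
  inc_left : ∀ v (e : G.edgeSet), v ∈ e.1 → inc v (left e)
  inc_right : ∀ v (e : G.edgeSet), v ∈ e.1 → inc v (right e)
  exists_inc : ∀ v, ∃ f, inc v f

theorem sum_range_add_succ (g : ℕ → ZMod 2) (n : ℕ) :
    ∑ i ∈ Finset.range n, (g i + g (i + 1)) = g 0 + g n := by
  induction n with
  | zero => simp [CharTwo.add_self_eq_zero]
  | succ n ih =>
    rw [Finset.sum_range_succ, ih]
    linear_combination CharTwo.add_self_eq_zero (g n)

namespace PolyDrawing

variable {G : SimpleGraph V} (D : PolyDrawing G)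

/-- The vertices and corners of a polygonal drawing. -/
def nodes : Set ℂ := Set.range D.vtx ∪ {z | ∃ e i, i ≤ D.len e ∧ z = D.pt e i}

theorem finite_nodes [Finite V] [Finite G.edgeSet] : D.nodes.Finite := by
  refine (Set.finite_range _).union ?_
  have : {z | ∃ e i, i ≤ D.len e ∧ z = D.pt e i} = ⋃ e, D.pt e '' Set.Iic (D.len e) := by
    ext z; simp [eq_comm]
  rw [this]
  exact Set.finite_iUnion fun e => (Set.finite_Iic _).image _

theorem pt_ne (e : G.edgeSet) {i : ℕ} (hi : i < D.len e) : D.pt e i ≠ D.pt e (i + 1) := by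
  intro h
  rcases Nat.eq_zero_or_pos i with rfl | h0
  · by_cases h1 : 1 < D.len e
    · exact absurd (D.pt_inj e 1 e 0 one_pos h1 (Nat.zero_le _) h.symm).2 one_ne_zero
    · have hl : D.len e = 1 := by omega
      have h2 := D.pt_len e
      rw [hl, ← zero_add 1, ← h, D.pt_zero] at h2
      have := D.vtx_inj h2
      have hadj : s(D.src e, D.tgt e) ∈ G.edgeSet := by rw [D.mk_eq]; exact e.2
      exact G.ne_of_adj hadj this
  · exact absurd (D.pt_inj e i e (i + 1) h0 hi hi h).2 (by omega)

/-- The straight-line plane graph made of the segments of a polygonal drawing. -/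
noncomputable def segmentGraph [Finite V] [Finite G.edgeSet] (hre : D.nodes.InjOn Complex.re) :
    SegmentGraph (Σ e : G.edgeSet, Fin (D.len e)) where
  fst s := D.pt s.1 s.2
  snd s := D.pt s.1 (s.2 + 1)
  nodes := D.nodes
  nodes_finite := D.finite_nodes
  fst_mem s := Or.inr ⟨s.1, s.2, s.2.2.le, rfl⟩
  snd_mem s := Or.inr ⟨s.1, s.2 + 1, s.2.2, rfl⟩
  fst_ne_snd s := D.pt_ne s.1 s.2.2
  re_injOn := hre
  inter := by
    rintro ⟨e, i⟩ ⟨e', j⟩ hne z hz hz'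
    have hij : e = e' → (i : ℕ) ≠ j := by
      rintro rfl h
      exact hne (by rw [Fin.ext h])
    rcases D.seg_inter e i e' j i.2 j.2 hij z hz hz' with h | h
    · exact Or.inr ⟨e, i, i.2.le, h⟩
    · exact Or.inr ⟨e, i + 1, i.2, h⟩
  node_mem := by
    rintro w (⟨v, rfl⟩ | ⟨e', j, hj, rfl⟩) ⟨e, i⟩ hw
    · exact D.vtx_mem e i v i.2 hw
    · by_cases h : e = e' ∧ (i : ℕ) = j
      · obtain ⟨rfl, rfl⟩ := h
        exact Or.inl rfl
      rcases hj.lt_or_eq with hj | rfl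
      · exact D.seg_inter e i e' j i.2 hj (fun h1 h2 => h ⟨h1, h2⟩) _ hw (left_mem_segment ..)
      · rw [D.pt_len] at hw ⊢
        exact D.vtx_mem e i _ i.2 hw

theorem pt_mem_nodes (e : G.edgeSet) {i : ℕ} (hi : i ≤ D.len e) : D.pt e i ∈ D.nodes :=
  Or.inr ⟨e, i, hi, rfl⟩

/-- The segments of an edge ending in a corner. -/
theorem eq_of_pt_eq {e : G.edgeSet} {i : ℕ} (hi : i + 1 < D.len e)
    {s : Σ e : G.edgeSet, Fin (D.len e)}
    (hs : D.pt s.1 s.2 = D.pt e (i + 1) ∨ D.pt s.1 (s.2 + 1) = D.pt e (i + 1)) :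
    s = ⟨e, i + 1, hi⟩ ∨ s = ⟨e, i, by omega⟩ := by
  obtain ⟨e', j⟩ := s
  rcases hs with h | h
  · obtain ⟨rfl, h2⟩ := D.pt_inj e (i + 1) e' j (by omega) hi j.2.le h.symm
    exact Or.inl (by rw [Fin.ext (a := ⟨i + 1, hi⟩) (b := j) h2])
  · obtain ⟨rfl, h2⟩ := D.pt_inj e (i + 1) e' (j + 1) (by omega) hi j.2 h.symm
    exact Or.inr (by rw [Fin.ext (a := ⟨i, _⟩) (b := j) (Nat.succ_injective h2)])

theorem ind_mem_edge (e : G.edgeSet) (v : V) :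
    ind (v ∈ e.1) = ind (D.src e = v) + ind (D.tgt e = v) := by
  have hadj : G.Adj (D.src e) (D.tgt e) := by
    have : s(D.src e, D.tgt e) ∈ G.edgeSet := by rw [D.mk_eq]; exact e.2
    exact this
  rw [← D.mk_eq e]
  by_cases h1 : D.src e = v
  · have h2 : D.tgt e ≠ v := fun h => hadj.ne (h1.trans h.symm)
    rw [ind_true h1, ind_false h2, ind_true (by simp [h1])]; rfl
  · by_cases h2 : D.tgt e = v
    · rw [ind_false h1, ind_true h2, ind_true (by simp [h2])]; rfl
    · rw [ind_false h1, ind_false h2, ind_false (by simp [Ne.symm h1, Ne.symm h2])]; rfl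

section

variable [Finite V] [Finite G.edgeSet] (hre : D.nodes.InjOn Complex.re)

theorem fst_segmentGraph (s) : (D.segmentGraph hre).fst s = D.pt s.1 s.2 := rfl

theorem snd_segmentGraph (s) : (D.segmentGraph hre).snd s = D.pt s.1 (s.2 + 1) := rfl

/-- The number of ends of a segment at a node. -/
theorem ends_node {w : ℂ} (hw : w ∈ D.nodes) (s) : (D.segmentGraph hre).ends s w.re =
    ind (D.pt s.1 s.2 = w) + ind (D.pt s.1 (s.2 + 1) = w) := by
  rw [SegmentGraph.ends, fst_segmentGraph, snd_segmentGraph]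
  congr 1 <;> refine ind_congr ⟨fun h => hre ?_ hw h, fun h => by rw [h]⟩
  · exact D.pt_mem_nodes s.1 s.2.2.le
  · exact D.pt_mem_nodes s.1 s.2.2

end

section

variable [Finite V] [Fintype G.edgeSet] (hre : D.nodes.InjOn Complex.re)

theorem sum_ends (x : G.edgeSet → ZMod 2) (t : ℝ) :
    ∑ s, x s.1 * (D.segmentGraph hre).ends s t =
      ∑ e, x e * (ind ((D.pt e 0).re = t) + ind ((D.pt e (D.len e)).re = t)) := by
  rw [Fintype.sum_sigma]
  refine Finset.sum_congr rfl fun e _ => ?_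
  refine (Finset.mul_sum _ _ (x e)).symm.trans ?_
  congr 1
  have := Fin.sum_univ_eq_sum_range
    (fun i => ind ((D.pt e i).re = t) + ind ((D.pt e (i + 1)).re = t)) (D.len e)
  rw [sum_range_add_succ fun i => ind ((D.pt e i).re = t)] at this
  exact this

theorem sum_ends_vtx (x : G.edgeSet → ZMod 2) (v : V) :
    ∑ s, x s.1 * (D.segmentGraph hre).ends s (D.vtx v).re = ∑ e, x e * ind (v ∈ e.1) := by
  rw [sum_ends]
  refine Finset.sum_congr rfl fun e _ => ?_
  rw [D.ind_mem_edge e v, D.pt_zero, D.pt_len]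
  have : ∀ u, ind ((D.vtx u).re = (D.vtx v).re) = ind (u = v) := fun u => ind_congr
    ⟨fun h => D.vtx_inj (hre (Or.inl ⟨u, rfl⟩) (Or.inl ⟨v, rfl⟩) h), fun h => by rw [h]⟩
  rw [this, this]

theorem sum_ends_of_cycle {x : G.edgeSet → ZMod 2} (hx : ∀ v, ∑ e, x e * ind (v ∈ e.1) = 0)
    (t : ℝ) : ∑ s, x s.1 * (D.segmentGraph hre).ends s t = 0 := by
  by_cases h : ∃ v, (D.vtx v).re = t
  · obtain ⟨v, rfl⟩ := h
    rw [sum_ends_vtx, hx]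
  · rw [sum_ends]
    refine Finset.sum_eq_zero fun e _ => ?_
    rw [D.pt_zero, D.pt_len, ind_false fun h' => h ⟨_, h'⟩, ind_false fun h' => h ⟨_, h'⟩]
    simp

theorem jump_succ (ψ : Set ℂ → ZMod 2) (e : G.edgeSet) {i : ℕ} (hi : i + 1 < D.len e) :
    (D.segmentGraph hre).jump ψ ⟨e, i, by omega⟩ = (D.segmentGraph hre).jump ψ ⟨e, i + 1, hi⟩ := by
  classical
  have h := (D.segmentGraph hre).sum_jump_ends ψ (D.pt e (i + 1)).re
  have hne : (⟨e, i, by omega⟩ : Σ e : G.edgeSet, Fin (D.len e)) ≠ ⟨e, i + 1, hi⟩ := by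
    intro h
    simp at h
  rw [Finset.sum_eq_add_of_mem _ _ (Finset.mem_univ _) (Finset.mem_univ _) hne] at h
  · rw [D.ends_node hre (D.pt_mem_nodes e hi.le), D.ends_node hre (D.pt_mem_nodes e hi.le)] at h
    rw [ind_true (P := D.pt e (i + 1) = D.pt e (i + 1)) rfl,
      ind_false (D.pt_ne e (i := i) (by omega)), ind_false (D.pt_ne e hi).symm] at h
    simp only [zero_add, mul_one, add_zero] at h
    exact CharTwo.add_eq_zero.1 h
  · rintro s - ⟨h1, h2⟩
    rw [D.ends_node hre (D.pt_mem_nodes e hi.le), ind_false, ind_false]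
    · simp
    · intro h; rcases D.eq_of_pt_eq hi (Or.inr h) with h | h <;> contradiction
    · intro h; rcases D.eq_of_pt_eq hi (Or.inl h) with h | h <;> contradiction

theorem jump_eq (ψ : Set ℂ → ZMod 2) (e : G.edgeSet) (i : ℕ) (hi : i < D.len e) :
    (D.segmentGraph hre).jump ψ ⟨e, i, hi⟩ =
      (D.segmentGraph hre).jump ψ ⟨e, 0, D.len_pos e⟩ := by
  induction i with
  | zero => rfl
  | succ i ih => rw [← D.jump_succ hre ψ e hi, ih]

theorem sides_succ (e : G.edgeSet) {i : ℕ} (hi : i + 1 < D.len e) {f : Set ℂ}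
    (hf : f = (D.segmentGraph hre).upper ⟨e, i, by omega⟩ ∨
      f = (D.segmentGraph hre).lower ⟨e, i, by omega⟩) :
    f = (D.segmentGraph hre).upper ⟨e, i + 1, hi⟩ ∨
      f = (D.segmentGraph hre).lower ⟨e, i + 1, hi⟩ := by
  classical
  set Γ := D.segmentGraph hre
  have key := fun g => D.jump_succ hre (fun h => ind (h = g)) e hi
  simp only [SegmentGraph.jump] at key
  by_cases heq : Γ.upper ⟨e, i, by omega⟩ = Γ.lower ⟨e, i, by omega⟩
  · have heq' : Γ.upper ⟨e, i + 1, hi⟩ = Γ.lower ⟨e, i + 1, hi⟩ := by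
      by_contra hne
      have := key (Γ.lower ⟨e, i + 1, hi⟩)
      rw [← show Γ = D.segmentGraph hre from rfl, heq, CharTwo.add_self_eq_zero,
        ind_false hne, ind_true rfl] at this
      simp at this
    have hn : D.pt e (i + 1) ∈ Γ.nodes := D.pt_mem_nodes e hi.le
    left
    have hf' : f = Γ.upper ⟨e, i, by omega⟩ := by
      rcases hf with h | h
      · exact h
      · rw [h]; exact heq.symm
    rw [hf']
    refine Γ.face_eq_of_node hn ?_ (Γ.exists_upper _) (Γ.exists_upper _)
      (Γ.seg_subset_closure_upper _ (Γ.snd_mem_seg ⟨e, i, by omega⟩))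
      (Γ.seg_subset_closure_upper _ (Γ.fst_mem_seg ⟨e, i + 1, hi⟩))
    intro s hs
    have : s = ⟨e, i + 1, hi⟩ ∨ s = ⟨e, i, by omega⟩ := by
      refine D.eq_of_pt_eq hi ?_
      rcases Γ.node_mem _ hn s hs with h | h
      · exact Or.inl h.symm
      · exact Or.inr h.symm
    rcases this with rfl | rfl
    · exact heq'
    · exact heq
  · have h1 := key f
    rw [← show Γ = D.segmentGraph hre from rfl] at h1
    by_contra hcon
    rw [not_or] at hcon
    rw [ind_false (Ne.symm hcon.1), ind_false (Ne.symm hcon.2)] at h1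
    rcases hf with h | h
    · rw [ind_true h.symm, ind_false] at h1
      · simp at h1
      · intro h'; exact heq (h.symm.trans h'.symm)
    · rw [ind_true h.symm, ind_false] at h1
      · simp at h1
      · intro h'; exact heq (h'.trans h)

theorem sides_eq (e : G.edgeSet) (i : ℕ) (hi : i < D.len e) {f : Set ℂ}
    (hf : f = (D.segmentGraph hre).upper ⟨e, 0, D.len_pos e⟩ ∨
      f = (D.segmentGraph hre).lower ⟨e, 0, D.len_pos e⟩) :
    f = (D.segmentGraph hre).upper ⟨e, i, hi⟩ ∨ f = (D.segmentGraph hre).lower ⟨e, i, hi⟩ := by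
  induction i with
  | zero => exact hf
  | succ i ih => exact D.sides_succ hre e hi (ih (by omega))

theorem vtx_mem_closure_side (e : G.edgeSet) {f : Set ℂ}
    (hf : f = (D.segmentGraph hre).upper ⟨e, 0, D.len_pos e⟩ ∨
      f = (D.segmentGraph hre).lower ⟨e, 0, D.len_pos e⟩) {v : V} (hv : v ∈ e.1) :
    D.vtx v ∈ closure f := by
  set Γ := D.segmentGraph hre
  rw [← D.mk_eq e, Sym2.mem_iff] at hv
  rcases hv with rfl | rfl
  · have h := Γ.fst_mem_seg ⟨e, 0, D.len_pos e⟩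
    rw [D.fst_segmentGraph hre] at h
    rw [← D.pt_zero]
    rcases hf with rfl | rfl
    · exact Γ.seg_subset_closure_upper _ h
    · exact Γ.seg_subset_closure_lower _ h
  · have hl : D.len e - 1 + 1 = D.len e := Nat.sub_add_cancel (D.len_pos e)
    have h := Γ.snd_mem_seg ⟨e, D.len e - 1, by omega⟩
    rw [D.snd_segmentGraph hre] at h
    simp only [hl] at h
    rw [← D.pt_len]
    rcases D.sides_eq hre e (D.len e - 1) (by omega) hf with rfl | rfl
    · exact Γ.seg_subset_closure_upper _ h
    · exact Γ.seg_subset_closure_lower _ h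

/-- The faces of a polygonal drawing. -/
noncomputable def faceSystem : FaceSystem G (D.segmentGraph hre).faces where
  left e := ⟨(D.segmentGraph hre).upper ⟨e, 0, D.len_pos e⟩, (D.segmentGraph hre).upper_mem_faces _⟩
  right e := ⟨(D.segmentGraph hre).lower ⟨e, 0, D.len_pos e⟩,
    (D.segmentGraph hre).lower_mem_faces _⟩
  inc v f := D.vtx v ∈ closure f.1
  const_of_no_jump φ h f g := by
    obtain ⟨ψ, hψ⟩ := (D.segmentGraph hre).exists_extension φ
    simp only [hψ] at h
    have hj : ∀ s, ψ ((D.segmentGraph hre).upper s) = ψ ((D.segmentGraph hre).lower s) := by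
      rintro ⟨e, i, hi⟩
      have h1 := D.jump_eq hre ψ e i hi
      simp only [SegmentGraph.jump] at h1
      rw [h e, CharTwo.add_self_eq_zero] at h1
      exact CharTwo.add_eq_zero.1 h1
    obtain ⟨f, hf⟩ := f
    obtain ⟨g, hg⟩ := g
    rw [hψ, hψ]
    obtain ⟨z, hz, rfl⟩ := hf
    obtain ⟨z', hz', rfl⟩ := hg
    exact (D.segmentGraph hre).eq_of_no_jump_univ ψ hj hz hz'
  exists_potential x hx := by
    obtain ⟨φ, h1, h2⟩ := (D.segmentGraph hre).exists_potential
      (x := fun s => x s.1) (D.sum_ends_of_cycle hre hx)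
    refine ⟨fun f => φ f.1, fun e => h1 _, fun v hv f g hf hg => ?_⟩
    refine h2 (D.vtx v) (fun s hs => hv _ ?_) _ f.2 _ g.2 hf hg
    obtain ⟨e, i, hi⟩ := s
    simp only
    rw [← D.mk_eq e]
    rcases D.vtx_mem e i v hi hs with h | h
    · rcases Nat.eq_zero_or_pos i with rfl | h0
      · rw [D.pt_zero] at h
        simp [D.vtx_inj h]
      · exact (D.pt_ne_vtx e i v h0 hi h.symm).elim
    · rcases Nat.lt_or_ge (i + 1) (D.len e) with h0 | h0
      · exact (D.pt_ne_vtx e (i + 1) v (by omega) h0 h.symm).elim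
      · rw [show i + 1 = D.len e by omega, D.pt_len] at h
        simp [D.vtx_inj h]
  sum_jump φ v := by
    obtain ⟨ψ, hψ⟩ := (D.segmentGraph hre).exists_extension φ
    simp only [hψ]
    rw [← (D.segmentGraph hre).sum_jump_ends ψ (D.vtx v).re, ← D.sum_ends_vtx hre]
    refine Finset.sum_congr rfl ?_
    rintro ⟨e, i, hi⟩ -
    rw [D.jump_eq hre ψ e i hi]; rfl
  inc_left v e hv := D.vtx_mem_closure_side hre e (Or.inl rfl) hv
  inc_right v e hv := D.vtx_mem_closure_side hre e (Or.inr rfl) hv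
  exists_inc v := by
    set Γ := D.segmentGraph hre
    have h : D.vtx v ∈ closure (⋃ f ∈ Γ.faces, f) := by
      refine closure_mono ?_ (Γ.dense_compl_support (D.vtx v))
      exact fun z hz => Set.mem_biUnion ⟨z, hz, rfl⟩ (Γ.mem_face hz)
    rw [Γ.finite_faces.closure_biUnion] at h
    obtain ⟨f, hf, h⟩ := Set.mem_iUnion₂.1 h
    exact ⟨⟨f, hf⟩, h⟩

end

end PolyDrawing

theorem ind_ne_zero_iff {P : Prop} : ind P ≠ 0 ↔ P := by
  by_cases h : P <;> simp [ind, h]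

theorem ZMod.two_eq_one_of_ne_zero {a : ZMod 2} (h : a ≠ 0) : a = 1 := by
  revert a; decide

/-- The incidence condition for an edge chain to be a cycle modulo two. -/
def IsEvenChain (G : SimpleGraph V) [Fintype G.edgeSet] (x : G.edgeSet → ZMod 2) : Prop :=
  ∀ v, ∑ e, x e * ind (v ∈ e.1) = 0

section

variable {G : SimpleGraph V} [Fintype G.edgeSet]

/-- A cycle that enters a vertex leaves it along another edge. -/
theorem IsEvenChain.exists_next {x : G.edgeSet → ZMod 2} (hx : IsEvenChain G x) {a b : V}
    (hab : G.Adj a b) (h : x ⟨s(a, b), hab⟩ ≠ 0) :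
    ∃ c, ∃ hbc : G.Adj b c, c ≠ a ∧ x ⟨s(b, c), hbc⟩ ≠ 0 := by
  by_contra! hcon
  have hb := hx b
  rw [Finset.sum_eq_single ⟨s(a, b), hab⟩] at hb
  · rw [ind_true (by simp), mul_one] at hb
    exact h hb
  · rintro ⟨e, he⟩ - hne
    by_cases hbe : b ∈ e
    · obtain ⟨c, rfl⟩ := Sym2.mem_iff_exists.1 hbe
      have hca : c ≠ a := by
        rintro rfl
        exact hne (Subtype.ext Sym2.eq_swap)
      rw [hcon c he hca, zero_mul]
    · rw [ind_false hbe, mul_zero]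
  · simp

/-- A nonzero cycle contains a path with three edges. -/
theorem IsEvenChain.exists_path {x : G.edgeSet → ZMod 2} (hx : IsEvenChain G x)
    (h : ∃ e, x e ≠ 0) : ∃ a b c d, ∃ hab : G.Adj a b, ∃ hbc : G.Adj b c, ∃ hcd : G.Adj c d,
      c ≠ a ∧ d ≠ b ∧ x ⟨s(a, b), hab⟩ ≠ 0 ∧ x ⟨s(b, c), hbc⟩ ≠ 0 ∧ x ⟨s(c, d), hcd⟩ ≠ 0 := by
  obtain ⟨⟨e, he⟩, h⟩ := h
  induction e using Sym2.ind with
  | _ a b =>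
    obtain ⟨c, hbc, hca, h2⟩ := hx.exists_next he h
    obtain ⟨d, hcd, hdb, h3⟩ := hx.exists_next hbc h2
    exact ⟨a, b, c, d, he, hbc, hcd, hca, hdb, h, h2, h3⟩

/-- A nonzero cycle of a simple graph has at least three edges. -/
theorem IsEvenChain.three_le_card {x : G.edgeSet → ZMod 2} (hx : IsEvenChain G x)
    (h : ∃ e, x e ≠ 0) {T : Finset G.edgeSet} (hT : ∀ e, x e ≠ 0 → e ∈ T) : 3 ≤ T.card := by
  classical
  obtain ⟨a, b, c, d, hab, hbc, hcd, hca, hdb, h1, h2, h3⟩ := hx.exists_path h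
  have hsub : ({⟨s(a, b), hab⟩, ⟨s(b, c), hbc⟩, ⟨s(c, d), hcd⟩} : Finset G.edgeSet) ⊆ T := by
    intro e he
    simp only [Finset.mem_insert, Finset.mem_singleton] at he
    rcases he with rfl | rfl | rfl
    · exact hT _ h1
    · exact hT _ h2
    · exact hT _ h3
  refine le_of_eq_of_le ?_ (Finset.card_le_card hsub)
  rw [eq_comm, Finset.card_eq_three]
  refine ⟨_, _, _, ?_, ?_, ?_, rfl⟩
  all_goals
    simp only [ne_eq, Subtype.ext_iff, Sym2.eq_iff]
    have := hab.ne; have := hbc.ne; have := hcd.ne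
    grind

/-- The edges inside a triangle form a cycle. -/
theorem isEvenChain_triangle {t : Finset V}
    (ht : G.IsNClique 3 t) :
    IsEvenChain G fun e => ind (∀ v ∈ e.1, v ∈ t) := by
  classical
  intro v
  beta_reduce
  by_cases hv : v ∈ t
  · obtain ⟨b, c, hbv, hcv, hbc, rfl⟩ : ∃ b c, b ≠ v ∧ c ≠ v ∧ b ≠ c ∧ t = {v, b, c} := by
      obtain ⟨x, y, z, h1, h2, h3, rfl⟩ := Finset.card_eq_three.1 ht.card_eq
      simp only [Finset.mem_insert, Finset.mem_singleton] at hv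
      rcases hv with rfl | rfl | rfl
      · exact ⟨y, z, h1.symm, h2.symm, h3, rfl⟩
      · exact ⟨x, z, h1, h3.symm, h2, by grind⟩
      · exact ⟨x, y, h2, h3, h1, by grind⟩
    have hvb : G.Adj v b := ht.isClique (by simp) (by simp) hbv.symm
    have hvc : G.Adj v c := ht.isClique (by simp) (by simp) hcv.symm
    rw [Finset.sum_eq_add_of_mem (⟨s(v, b), hvb⟩ : G.edgeSet) ⟨s(v, c), hvc⟩ (Finset.mem_univ _)
      (Finset.mem_univ _)]
    · rw [ind_true (by simp), ind_true (by simp), ind_true (by simp), ind_true (by simp)]; rfl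
    · simp only [ne_eq, Subtype.ext_iff, Sym2.eq_iff]; grind
    · rintro ⟨e, he⟩ - ⟨h1, h2⟩
      by_cases hve : v ∈ e
      · obtain ⟨d, rfl⟩ := Sym2.mem_iff_exists.1 hve
        rw [ind_false, zero_mul]
        intro h
        have h3 := h d (by simp)
        simp only [Finset.mem_insert, Finset.mem_singleton] at h3
        rcases h3 with rfl | rfl | rfl
        · exact G.loopless.irrefl _ he
        · exact h1 rfl
        · exact h2 rfl
      · rw [ind_false hve, mul_zero]
  · refine Finset.sum_eq_zero fun e _ => ?_
    by_cases hve : v ∈ e.1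
    · rw [ind_false (fun h => hv (h v hve)), zero_mul]
    · rw [ind_false hve, mul_zero]

end

theorem card_triangle_edges [DecidableEq V] {G : SimpleGraph V} {t : Finset V}
    (ht : G.IsNClique 3 t)
    {T : Finset G.edgeSet} (hT : ∀ e, e ∈ T ↔ ∀ v ∈ e.1, v ∈ t) : T.card = 3 := by
  obtain ⟨a, b, c, h1, h2, h3, rfl⟩ := Finset.card_eq_three.1 ht.card_eq
  have hab : G.Adj a b := ht.isClique (by simp) (by simp) h1
  have hac : G.Adj a c := ht.isClique (by simp) (by simp) h2
  have hbc : G.Adj b c := ht.isClique (by simp) (by simp) h3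
  rw [Finset.card_eq_three]
  refine ⟨⟨s(a, b), hab⟩, ⟨s(a, c), hac⟩, ⟨s(b, c), hbc⟩, ?_, ?_, ?_, ?_⟩
  · simp only [ne_eq, Subtype.ext_iff, Sym2.eq_iff]; grind
  · simp only [ne_eq, Subtype.ext_iff, Sym2.eq_iff]; grind
  · simp only [ne_eq, Subtype.ext_iff, Sym2.eq_iff]; grind
  · ext ⟨e, he⟩
    rw [hT]
    induction e using Sym2.ind with
    | _ u v =>
      have := G.ne_of_adj he
      simp only [Sym2.mem_iff, Finset.mem_insert, Finset.mem_singleton, Subtype.ext_iff,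
        Sym2.eq_iff, forall_eq_or_imp, forall_eq]
      grind

namespace FaceSystem

variable {G : SimpleGraph V} [Fintype G.edgeSet] {F : Type*} (Φ : FaceSystem G F)

/-- The jump of a function of the faces across an edge. -/
def jump (φ : F → ZMod 2) (e : G.edgeSet) : ZMod 2 := φ (Φ.left e) + φ (Φ.right e)

theorem isEvenChain_jump (φ : F → ZMod 2) : IsEvenChain G (Φ.jump φ) := Φ.sum_jump φ

theorem jump_ind_ne_zero {f : F} {e : G.edgeSet} (h : Φ.jump (fun g => ind (g = f)) e ≠ 0) :
    Φ.left e = f ∨ Φ.right e = f := by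
  by_contra hcon
  rw [not_or] at hcon
  exact h (by simp [jump, ind_false hcon.1, ind_false hcon.2])

theorem inc_of_jump {f : F} {e : G.edgeSet} (h : Φ.jump (fun g => ind (g = f)) e ≠ 0) {v : V}
    (hv : v ∈ e.1) : Φ.inc v f := by
  rcases Φ.jump_ind_ne_zero h with rfl | rfl
  · exact Φ.inc_left v e hv
  · exact Φ.inc_right v e hv

/-- The boundary vertices of every face are pairwise adjacent and there are at most three. -/
structure IsTriangular : Prop where
  adj : ∀ f u w, u ≠ w → Φ.inc u f → Φ.inc w f → G.Adj u w
  card_le : ∀ f (t : Finset V), (∀ v ∈ t, Φ.inc v f) → t.card ≤ 3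

variable {Φ}

/-- A function of the vertices without jumps along the edges is constant. -/
theorem IsTriangular.eq_of_adj (hΦ : Φ.IsTriangular) {c : V → ZMod 2}
    (hc : ∀ u v, G.Adj u v → c u = c v) (u w : V) : c u = c w := by
  classical
  let φ : F → ZMod 2 := fun f => if h : ∃ v, Φ.inc v f then c h.choose else 0
  have hφ : ∀ v f, Φ.inc v f → φ f = c v := by
    intro v f hv
    have h : ∃ v, Φ.inc v f := ⟨v, hv⟩
    simp only [φ, dif_pos h]
    by_cases heq : h.choose = v
    · rw [heq]
    · exact hc _ _ (hΦ.adj f _ _ heq h.choose_spec hv)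
  obtain ⟨f, hf⟩ := Φ.exists_inc u
  obtain ⟨g, hg⟩ := Φ.exists_inc w
  rw [← hφ u f hf, ← hφ w g hg]
  refine Φ.const_of_no_jump φ (fun e => ?_) f g
  obtain ⟨⟨a, b⟩, h⟩ := e
  have ha : a ∈ s(a, b) := by simp
  rw [hφ a _ (Φ.inc_left a ⟨s(a, b), h⟩ ha), hφ a _ (Φ.inc_right a ⟨s(a, b), h⟩ ha)]

variable [Fintype V]

theorem IsTriangular.exists_jump (hΦ : Φ.IsTriangular) (hV : 3 ≤ Fintype.card V) (f : F) :
    ∃ e, Φ.jump (fun g => ind (g = f)) e ≠ 0 := by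
  classical
  by_contra! hcon
  have hall : ∀ g, g = f := fun g => by
    have := Φ.const_of_no_jump (fun g => ind (g = f)) (fun e => CharTwo.add_eq_zero.1 (hcon e)) g f
    rw [ind_true rfl] at this
    exact ind_ne_zero_iff.1 (this ▸ one_ne_zero)
  have hinc : ∀ v, Φ.inc v f := fun v => by
    obtain ⟨g, hg⟩ := Φ.exists_inc v
    rwa [hall g] at hg
  obtain ⟨t, -, ht⟩ := Finset.exists_subset_card_eq (s := (Finset.univ : Finset V)) (n := 3)
    (by simpa using hV)
  have hcl : G.IsNClique 3 t := ⟨fun u _ w _ hne => hΦ.adj f u w hne (hinc u) (hinc w), ht⟩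
  obtain ⟨φ, hφ, -⟩ := Φ.exists_potential _ (isEvenChain_triangle hcl)
  obtain ⟨a, b, c, h1, -, -, rfl⟩ := Finset.card_eq_three.1 ht
  have := hφ ⟨s(a, b), hcl.isClique (by simp) (by simp) h1⟩
  rw [hall (Φ.left _), hall (Φ.right _), CharTwo.add_self_eq_zero, ind_true (by simp)] at this
  exact zero_ne_one this

theorem IsTriangular.exists_triangle (hΦ : Φ.IsTriangular) (hV : 3 ≤ Fintype.card V) (f : F) :
    ∃ t : Finset V, G.IsNClique 3 t ∧ (∀ v, Φ.inc v f ↔ v ∈ t) ∧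
      ∀ e : G.edgeSet, (Φ.left e = f ∨ Φ.right e = f) ∧ Φ.left e ≠ Φ.right e ↔
        ∀ v ∈ e.1, v ∈ t := by
  classical
  have hch := Φ.isEvenChain_jump fun g => ind (g = f)
  obtain ⟨a, b, c, d, hab, hbc, hcd, hca, hdb, h1, h2, h3⟩ :=
    hch.exists_path (hΦ.exists_jump hV f)
  have ia := Φ.inc_of_jump h1 (v := a) (by simp)
  have ib := Φ.inc_of_jump h1 (v := b) (by simp)
  have ic := Φ.inc_of_jump h2 (v := c) (by simp)
  have hcard : ({a, b, c} : Finset V).card = 3 :=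
    Finset.card_eq_three.2 ⟨a, b, c, hab.ne, hca.symm, hbc.ne, rfl⟩
  have hinc : ∀ v, Φ.inc v f ↔ v ∈ ({a, b, c} : Finset V) := by
    intro v
    constructor
    · intro hv
      by_contra hmem
      have := hΦ.card_le f (insert v {a, b, c}) (by
        intro w hw
        simp only [Finset.mem_insert, Finset.mem_singleton] at hw
        rcases hw with rfl | rfl | rfl | rfl <;> assumption)
      rw [Finset.card_insert_of_notMem hmem, hcard] at this
      omega
    · intro hv
      simp only [Finset.mem_insert, Finset.mem_singleton] at hv
      rcases hv with rfl | rfl | rfl <;> assumption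
  have hda : d = a := by
    have := (hinc d).1 (Φ.inc_of_jump h3 (v := d) (by simp))
    have := hcd.ne
    grind
  subst hda
  have hJ : ∀ e : G.edgeSet, Φ.jump (fun g => ind (g = f)) e ≠ 0 ↔
      ∀ v ∈ e.1, v ∈ ({d, b, c} : Finset V) := by
    intro e
    refine ⟨fun h v hv => (hinc v).1 (Φ.inc_of_jump h hv), fun h => ?_⟩
    obtain ⟨e, he⟩ := e
    induction e using Sym2.ind with
    | _ u v =>
      have hu := h u (by simp)
      have hv := h v (by simp)
      have huv := G.ne_of_adj he
      have : s(u, v) = s(d, b) ∨ s(u, v) = s(b, c) ∨ s(u, v) = s(c, d) := by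
        simp only [Sym2.eq_iff]; grind
      rcases this with h | h | h
      · simpa only [h] using h1
      · simpa only [h] using h2
      · simpa only [h] using h3
  refine ⟨{d, b, c}, ⟨fun u hu w hw hne => hΦ.adj f u w hne ((hinc u).2 hu) ((hinc w).2 hw),
    hcard⟩, hinc, fun e => ?_⟩
  rw [← hJ]
  constructor
  · rintro ⟨rfl | rfl, hne⟩
    · simp [jump, ind_true, ind_false hne.symm]
    · simp [jump, ind_true, ind_false hne]
  · intro h
    refine ⟨Φ.jump_ind_ne_zero h, fun heq => h ?_⟩
    rw [jump, heq, CharTwo.add_self_eq_zero]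

theorem IsTriangular.left_ne_right (hΦ : Φ.IsTriangular) (hV : 3 ≤ Fintype.card V)
    (e : G.edgeSet) : Φ.left e ≠ Φ.right e := by
  obtain ⟨t, -, h1, h2⟩ := hΦ.exists_triangle hV (Φ.left e)
  exact ((h2 e).2 fun v hv => (h1 v).1 (Φ.inc_left v e hv)).2

theorem IsTriangular.card_edges (hΦ : Φ.IsTriangular) (hV : 3 ≤ Fintype.card V) [DecidableEq F]
    (f : F) : (Finset.univ.filter fun e => Φ.left e = f ∨ Φ.right e = f).card = 3 := by
  classical
  obtain ⟨t, ht, h1, h2⟩ := hΦ.exists_triangle hV f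
  refine card_triangle_edges ht fun e => ?_
  rw [← h2]
  simp [hΦ.left_ne_right hV e]

end FaceSystem

theorem finrank_ker_eq_one {K α W : Type*} [Field K] [Nonempty α] [AddCommGroup W]
    [Module K W] (L : (α → K) →ₗ[K] W) (hone : L 1 = 0)
    (h : ∀ c, L c = 0 → ∀ a b, c a = c b) : Module.finrank K (LinearMap.ker L) = 1 := by
  obtain ⟨a⟩ := ‹Nonempty α›
  refine finrank_eq_one_iff'.2 ⟨⟨1, hone⟩, ?_, ?_⟩
  · intro h0
    exact one_ne_zero (congrFun (congrArg Subtype.val h0) a : (1 : K) = 0)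
  · rintro ⟨c, hc⟩
    refine ⟨c a, Subtype.ext (funext fun b => ?_)⟩
    simpa using h c hc a b

theorem sum_ind {α : Type*} [Fintype α] (P : α → Prop) [DecidablePred P] :
    ∑ a, ind (P a) = (((Finset.univ.filter P).card : ℕ) : ZMod 2) := by
  rw [Finset.card_filter, Nat.cast_sum]
  refine Finset.sum_congr rfl fun a _ => ?_
  by_cases h : P a
  · rw [ind_true h, if_pos h, Nat.cast_one]
  · rw [ind_false h, if_neg h, Nat.cast_zero]

namespace FaceSystem

variable {G : SimpleGraph V} [Fintype G.edgeSet] {F : Type*} {Φ : FaceSystem G F} [Fintype V]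

theorem IsTriangular.sum_sides [Fintype F] [DecidableEq F] {M : Type*} [AddCommMonoid M]
    (hΦ : Φ.IsTriangular) (hV : 3 ≤ Fintype.card V) {X : Finset G.edgeSet} {k : ℕ}
    (hX : ∀ f, (X.filter fun e => Φ.left e = f ∨ Φ.right e = f).card = k) (φ : F → M) :
    ∑ e ∈ X, (φ (Φ.left e) + φ (Φ.right e)) = k • ∑ f, φ f := by
  have h1 : ∀ e ∈ X, φ (Φ.left e) + φ (Φ.right e) =
      ∑ f, if Φ.left e = f ∨ Φ.right e = f then φ f else 0 := by
    intro e _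
    rw [← Finset.sum_filter]
    have : (Finset.univ.filter fun f => Φ.left e = f ∨ Φ.right e = f) =
        {Φ.left e, Φ.right e} := by ext f; simp [eq_comm]
    rw [this, Finset.sum_pair (hΦ.left_ne_right hV e)]
  rw [Finset.sum_congr rfl h1, Finset.sum_comm, Finset.smul_sum]
  refine Finset.sum_congr rfl fun f _ => ?_
  rw [← Finset.sum_filter, Finset.sum_const, hX]

theorem IsTriangular.euler [Fintype F] (hΦ : Φ.IsTriangular) (hV : 3 ≤ Fintype.card V) :
    Fintype.card G.edgeSet + 2 = Fintype.card V + Fintype.card F := by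
  classical
  have : Nonempty V := Fintype.card_pos_iff.1 (by omega)
  have : Nonempty F := ⟨(Φ.exists_inc (Classical.arbitrary V)).choose⟩
  let B : (F → ZMod 2) →ₗ[ZMod 2] (G.edgeSet → ZMod 2) :=
    LinearMap.funLeft _ _ Φ.left + LinearMap.funLeft _ _ Φ.right
  let A : Matrix V G.edgeSet (ZMod 2) := Matrix.of fun v e => ind (v ∈ e.1)
  have hB : ∀ φ e, B φ e = φ (Φ.left e) + φ (Φ.right e) := fun φ e => rfl
  have hA : ∀ x v, A.mulVecLin x v = ∑ e, x e * ind (v ∈ e.1) := fun x v => by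
    simp [A, Matrix.mulVec, dotProduct, mul_comm]
  have hAt : ∀ c a b (h : G.Adj a b), A.transpose.mulVecLin c ⟨s(a, b), h⟩ = c a + c b := by
    intro c a b h
    have : ∀ v, v ∈ s(a, b) ↔ v = a ∨ v = b := fun v => Sym2.mem_iff
    simp only [A, Matrix.mulVecLin_apply, Matrix.mulVec, dotProduct, Matrix.transpose_apply,
      Matrix.of_apply]
    rw [Finset.sum_eq_add_of_mem a b (Finset.mem_univ _) (Finset.mem_univ _) h.ne]
    · rw [ind_true (by simp), ind_true (by simp), one_mul, one_mul]
    · rintro v - ⟨h1, h2⟩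
      rw [ind_false (by simp [h1, h2]), zero_mul]
  have kerB : Module.finrank (ZMod 2) (LinearMap.ker B) = 1 := by
    refine finrank_ker_eq_one B (funext fun e => ?_) fun c hc => Φ.const_of_no_jump c fun e => ?_
    · rw [hB]; rfl
    · exact CharTwo.add_eq_zero.1 (congrFun hc e)
  have kerAt : Module.finrank (ZMod 2) (LinearMap.ker A.transpose.mulVecLin) = 1 := by
    refine finrank_ker_eq_one _ (funext fun e => ?_) fun c hc => hΦ.eq_of_adj fun u v h => ?_
    · obtain ⟨⟨a, b⟩, h⟩ := e
      exact (hAt 1 a b h).trans rfl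
    · have := congrFun hc ⟨s(u, v), h⟩
      rw [hAt] at this
      exact CharTwo.add_eq_zero.1 this
  have hex : LinearMap.range B = LinearMap.ker A.mulVecLin := by
    ext x
    rw [LinearMap.mem_ker]
    constructor
    · rintro ⟨φ, rfl⟩
      exact funext fun v => (hA _ v).trans (Φ.sum_jump φ v)
    · intro hx
      obtain ⟨φ, hφ, -⟩ := Φ.exists_potential x fun v => (hA x v).symm.trans (congrFun hx v)
      exact ⟨φ, funext hφ⟩
  have e1 := B.finrank_range_add_finrank_ker
  have e2 := A.mulVecLin.finrank_range_add_finrank_ker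
  have e3 := A.transpose.mulVecLin.finrank_range_add_finrank_ker
  have e4 : Module.finrank (ZMod 2) (LinearMap.range A.transpose.mulVecLin) =
    Module.finrank (ZMod 2) (LinearMap.range A.mulVecLin) := A.rank_transpose
  rw [Module.finrank_fintype_fun_eq_card] at e1 e2 e3
  rw [← hex] at e2
  omega

theorem IsTriangular.card_faces [Fintype F] (hΦ : Φ.IsTriangular) (hV : 3 ≤ Fintype.card V) :
    Fintype.card F = 2 * (Fintype.card V - 2) := by
  classical
  have h1 := hΦ.euler hV
  have h2 := hΦ.sum_sides hV (hΦ.card_edges hV) (fun _ => (1 : ℕ))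
  simp only [Finset.sum_const, Finset.card_univ, smul_eq_mul, mul_one] at h2
  omega

theorem IsTriangular.card_le_of_transversal [Fintype F] (hΦ : Φ.IsTriangular)
    (hV : 3 ≤ Fintype.card V) {X : Finset (Sym2 V)} (hX : IsTriangleTransversal G X) :
    Fintype.card F ≤ 2 * X.card := by
  classical
  let Y : Finset G.edgeSet := Finset.univ.filter fun e => e.1 ∈ X
  have hY : Y.card ≤ X.card := Finset.card_le_card_of_injOn Subtype.val
    (fun e he => (Finset.mem_filter.1 he).2) Subtype.val_injective.injOn
  have hsub : (Finset.univ : Finset F) ⊆ Y.image Φ.left ∪ Y.image Φ.right := by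
    intro f _
    obtain ⟨t, ht, -, h2⟩ := hΦ.exists_triangle hV f
    obtain ⟨e, he, het⟩ := hX.2 t ht
    have heY : (⟨e, hX.1 he⟩ : G.edgeSet) ∈ Y := Finset.mem_filter.2 ⟨Finset.mem_univ _, he⟩
    rw [Finset.mem_union, Finset.mem_image, Finset.mem_image]
    rcases ((h2 ⟨e, hX.1 he⟩).2 het).1 with h | h
    · exact Or.inl ⟨_, heY, h⟩
    · exact Or.inr ⟨_, heY, h⟩
  have h1 := Finset.card_le_card hsub
  have h2 := Finset.card_union_le (Y.image Φ.left) (Y.image Φ.right)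
  have h3 := Finset.card_image_le (s := Y) (f := Φ.left)
  have h4 := Finset.card_image_le (s := Y) (f := Φ.right)
  rw [Finset.card_univ] at h1
  omega

variable (Φ) in
/-- The dual graph of a system of faces. -/
def dual : SimpleGraph F where
  Adj f g := f ≠ g ∧ ∃ e, s(Φ.left e, Φ.right e) = s(f, g)
  symm := ⟨fun _ _ h => ⟨h.1.symm, h.2.imp fun _ he => he.trans Sym2.eq_swap⟩⟩
  loopless := ⟨fun _ h => h.1 rfl⟩

/-- A function of the faces with odd sum jumps across at least three edges. -/
theorem IsTriangular.three_le_card_jump [Fintype F] (hΦ : Φ.IsTriangular)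
    (hV : 3 ≤ Fintype.card V) {φ : F → ZMod 2} (hφ : ∑ f, φ f ≠ 0) {T : Finset G.edgeSet}
    (hT : ∀ e, Φ.jump φ e ≠ 0 → e ∈ T) : 3 ≤ T.card := by
  classical
  refine (Φ.isEvenChain_jump φ).three_le_card ?_ hT
  by_contra! hcon
  have := hΦ.sum_sides hV (hΦ.card_edges hV) φ
  rw [Finset.sum_eq_zero fun e _ => show φ (Φ.left e) + φ (Φ.right e) = 0 from hcon e,
    ZMod.two_eq_one_of_ne_zero hφ] at this
  exact absurd this (by decide)

theorem IsTriangular.exists_perfectMatching [Fintype F] (hΦ : Φ.IsTriangular)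
    (hV : 3 ≤ Fintype.card V) : ∃ M : Φ.dual.Subgraph, M.IsPerfectMatching := by
  classical
  rw [SimpleGraph.tutte]
  intro u hu
  let H := ((⊤ : Φ.dual.Subgraph).deleteVerts u).coe
  have hmem : ∀ f, f ∈ ((⊤ : Φ.dual.Subgraph).deleteVerts u).verts ↔ f ∉ u := by simp
  let A (C : H.ConnectedComponent) (f : F) : Prop := ∃ h, (⟨f, h⟩ : _) ∈ C.supp
  have hAu : ∀ {C f}, A C f → f ∉ u := fun {C f} h => (hmem f).1 h.1
  have hAC : ∀ {C D f}, A C f → A D f → C = D := by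
    rintro C D f ⟨h, h1⟩ ⟨_, h2⟩
    rw [ConnectedComponent.mem_supp_iff] at h1 h2
    rw [← h1, ← h2]
  have hAadj : ∀ {C f g}, A C f → g ∉ u → Φ.dual.Adj f g → A C g := by
    rintro C f g ⟨h, h1⟩ hg hfg
    refine ⟨(hmem g).2 hg, ?_⟩
    rw [ConnectedComponent.mem_supp_iff] at h1 ⊢
    rw [← h1, ConnectedComponent.eq]
    refine Adj.reachable ?_
    simpa [H, hg, (hmem f).1 h] using hfg.symm
  let T (C : H.ConnectedComponent) : Finset G.edgeSet :=
    Finset.univ.filter fun e => Φ.jump (fun f => ind (A C f)) e ≠ 0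
  have hT : ∀ {C e}, e ∈ T C → (A C (Φ.left e) ∧ Φ.right e ∈ u) ∨
      (A C (Φ.right e) ∧ Φ.left e ∈ u) := by
    intro C e he
    replace he := (Finset.mem_filter.1 he).2
    have hd : Φ.dual.Adj (Φ.left e) (Φ.right e) := ⟨hΦ.left_ne_right hV e, e, rfl⟩
    by_contra! hcon
    by_cases h1 : A C (Φ.left e)
    · have h2 := hAadj h1 (hcon.1 h1) hd
      exact he (by simp only [jump, ind_true h1, ind_true h2]; rfl)
    · by_cases h2 : A C (Φ.right e)
      · exact h1 (hAadj h2 (hcon.2 h2) hd.symm)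
      · exact he (by simp only [jump, ind_false h1, ind_false h2]; rfl)
  let U : Finset G.edgeSet := u.toFinset.biUnion fun f =>
    Finset.univ.filter fun e => Φ.left e = f ∨ Φ.right e = f
  have hU : U.card ≤ 3 * u.ncard := by
    refine Finset.card_biUnion_le.trans ?_
    rw [Finset.sum_congr rfl fun f _ => hΦ.card_edges hV f, Finset.sum_const,
      Set.ncard_eq_toFinset_card']
    simp [mul_comm]
  let O : Finset H.ConnectedComponent := H.oddComponents.toFinset
  have hO : 3 * O.card ≤ (O.biUnion T).card := by
    rw [Finset.card_biUnion]
    · rw [mul_comm, ← smul_eq_mul, ← Finset.sum_const]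
      refine Finset.sum_le_sum fun C hC => hΦ.three_le_card_jump hV (φ := fun f => ind (A C f)) ?_
        fun e he => Finset.mem_filter.2 ⟨Finset.mem_univ _, he⟩
      have hodd : Odd C.supp.ncard := by simpa [O] using hC
      have hcard : C.supp.ncard = (Finset.univ.filter (A C)).card := by
        rw [← Set.ncard_image_of_injective _ Subtype.val_injective, ← Set.ncard_coe_finset]
        congr 1
        ext f
        simp [A]
      rw [sum_ind, ← hcard, ZMod.natCast_ne_zero_iff_odd]
      exact hodd
    · intro C _ D _ hne
      rw [Function.onFun, Finset.disjoint_left]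
      intro e h1 h2
      rcases hT h1 with ⟨h1, h1'⟩ | ⟨h1, h1'⟩ <;> rcases hT h2 with ⟨h2, h2'⟩ | ⟨h2, h2'⟩
      · exact hne (hAC h1 h2)
      · exact hAu h1 h2'
      · exact hAu h1 h2'
      · exact hne (hAC h1 h2)
  have hsub : O.biUnion T ⊆ U := by
    intro e he
    obtain ⟨C, -, he⟩ := Finset.mem_biUnion.1 he
    simp only [U, Finset.mem_biUnion, Set.mem_toFinset, Finset.mem_filter, Finset.mem_univ,
      true_and]
    rcases hT he with ⟨-, h⟩ | ⟨-, h⟩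
    · exact ⟨_, h, Or.inr rfl⟩
    · exact ⟨_, h, Or.inl rfl⟩
  have hlt : u.ncard < O.card := by
    rw [← Set.ncard_eq_toFinset_card']
    exact hu
  have := Finset.card_le_card hsub
  omega

/-- There are edges of which every face has exactly one on its boundary. -/
theorem IsTriangular.exists_edges [Fintype F] [DecidableEq F] (hΦ : Φ.IsTriangular)
    (hV : 3 ≤ Fintype.card V) : ∃ X : Finset G.edgeSet,
      ∀ f, (X.filter fun e => Φ.left e = f ∨ Φ.right e = f).card = 1 := by
  classical
  obtain ⟨M, hM, hMs⟩ := hΦ.exists_perfectMatching hV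
  have hch : ∀ p : Sym2 F, p ∈ M.edgeSet → ∃ e, s(Φ.left e, Φ.right e) = p := by
    rintro ⟨f, g⟩ h
    exact (M.adj_sub h).2
  have : Nonempty V := Fintype.card_pos_iff.1 (by omega)
  have : Nonempty G.edgeSet :=
    ⟨(hΦ.exists_jump hV (Φ.exists_inc (Classical.arbitrary V)).choose).choose⟩
  choose! c hc using hch
  refine ⟨Finset.univ.filter fun e => s(Φ.left e, Φ.right e) ∈ M.edgeSet ∧
    c s(Φ.left e, Φ.right e) = e, fun f => ?_⟩
  obtain ⟨g, hg, huniq⟩ := hM (hMs f)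
  have hfg : s(f, g) ∈ M.edgeSet := hg
  rw [Finset.card_eq_one]
  refine ⟨c s(f, g), ?_⟩
  ext e
  simp only [Finset.mem_filter, Finset.mem_univ, true_and, Finset.mem_singleton]
  constructor
  · rintro ⟨⟨h1, h2⟩, rfl | rfl⟩
    · have : Φ.right e = g := huniq _ h1
      rw [← this, h2]
    · have : Φ.left e = g := huniq _ (M.adj_symm h1)
      rw [← this, Sym2.eq_swap, h2]
  · rintro rfl
    rw [hc _ hfg]
    refine ⟨⟨hfg, rfl⟩, ?_⟩
    have := Sym2.eq_iff.1 (hc _ hfg)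
    tauto

theorem IsTriangular.tau_eq [Fintype F] (hΦ : Φ.IsTriangular) (hV : 3 ≤ Fintype.card V) :
    tau G = Fintype.card V - 2 := by
  classical
  have hF := hΦ.card_faces hV
  obtain ⟨X, hX⟩ := hΦ.exists_edges hV
  have hcard : X.card = Fintype.card V - 2 := by
    have := hΦ.sum_sides hV hX fun _ => (1 : ℕ)
    simp only [Finset.sum_const, Finset.card_univ, smul_eq_mul, mul_one] at this
    omega
  refine le_antisymm (Nat.sInf_le ⟨X.map (Function.Embedding.subtype _), ⟨?_, ?_⟩, ?_⟩) ?_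
  · intro e he
    obtain ⟨e, -, rfl⟩ := Finset.mem_map.1 he
    exact e.2
  · intro t ht
    by_contra! hcon
    obtain ⟨φ, hφ, -⟩ := Φ.exists_potential _ (isEvenChain_triangle ht)
    have h1 := hΦ.sum_sides hV hX φ
    have h2 := hΦ.sum_sides hV (hΦ.card_edges hV) φ
    simp only [hφ] at h1 h2
    rw [Finset.sum_eq_zero, one_smul] at h1
    · rw [← h1, smul_zero] at h2
      rw [sum_ind, card_triangle_edges ht (by simp)] at h2
      exact absurd h2 (by decide)
    · intro e he
      obtain ⟨v, hv, hvt⟩ := hcon e.1 (Finset.mem_map_of_mem _ he)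
      exact ind_false fun h => hvt (h v hv)
  · rw [Finset.card_map, hcard]
  · refine le_csInf ?_ ?_
    · refine ⟨_, G.edgeFinset, ⟨by simp, fun t ht => ?_⟩, rfl⟩
      obtain ⟨a, b, c, h1, -, -, rfl⟩ := Finset.card_eq_three.1 ht.card_eq
      exact ⟨s(a, b), by simpa using ht.isClique (by simp) (by simp) h1, by simp⟩
    · rintro n ⟨Y, hY, rfl⟩
      have := hΦ.card_le_of_transversal hV hY
      omega

end FaceSystem

/-- No face of a drawing of the complete graph on four vertices has all of them on its boundary. -/
theorem FaceSystem.exists_not_inc {H : SimpleGraph V} [Fintype H.edgeSet] {F : Type*}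
    (Φ : FaceSystem H F) {t : Finset V} (ht : t.card = 4)
    (hH : ∀ a b, H.Adj a b ↔ a ≠ b ∧ a ∈ t ∧ b ∈ t) (f : F) : ∃ v ∈ t, ¬ Φ.inc v f := by
  classical
  by_contra! hinc
  have hcl : ∀ v ∈ t, H.IsNClique 3 (t.erase v) := by
    intro v hv
    refine ⟨fun a ha b hb hne => (hH a b).2 ⟨hne, ?_, ?_⟩, ?_⟩
    · exact Finset.mem_of_mem_erase ha
    · exact Finset.mem_of_mem_erase hb
    · rw [Finset.card_erase_of_mem hv, ht]
  have hex : ∀ v ∈ t, ∃ φ : F → ZMod 2,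
      (∀ e, φ (Φ.left e) + φ (Φ.right e) = ind (∀ w ∈ e.1, w ∈ t.erase v)) ∧
      φ f = 0 ∧ ∀ g, Φ.inc v g → φ g = 0 := by
    intro v hv
    obtain ⟨φ, h1, h2⟩ := Φ.exists_potential _ (isEvenChain_triangle (hcl v hv))
    have h3 : ∀ g, Φ.inc v g → φ g + φ f = 0 := by
      intro g hg
      rw [CharTwo.add_eq_zero]
      refine h2 v (fun e he => ?_) g f hg (hinc v hv)
      exact ind_false fun h => Finset.notMem_erase v t (h v he)
    refine ⟨fun g => φ g + φ f, fun e => ?_, h3 f (hinc v hv), h3⟩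
    rw [← h1 e]
    linear_combination CharTwo.add_self_eq_zero (φ f)
  choose! ψ hψ hψf hψinc using hex
  have hsum : ∀ g, ∑ v ∈ t, ψ v g = 0 := by
    intro g
    rw [Φ.const_of_no_jump (fun g => ∑ v ∈ t, ψ v g) ?_ g f]
    · exact Finset.sum_eq_zero hψf
    · rintro ⟨⟨a, b⟩, hab⟩
      obtain ⟨hne, ha, hb⟩ := (hH a b).1 hab
      rw [← CharTwo.add_eq_zero, ← Finset.sum_add_distrib,
        Finset.sum_congr rfl fun v hv => hψ v hv _]
      have hs : (t.erase a).erase b ⊆ t := (Finset.erase_subset _ _).trans (Finset.erase_subset _ _)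
      rw [← Finset.sum_subset hs]
      · have : ∀ v ∈ (t.erase a).erase b, ind (∀ w ∈ s(a, b), w ∈ t.erase v) = 1 := by
          intro v hv
          refine ind_true fun w hw => ?_
          rw [Sym2.mem_iff] at hw
          grind
        rw [Finset.sum_congr rfl this, Finset.sum_const,
          Finset.card_erase_of_mem (Finset.mem_erase.2 ⟨hne.symm, hb⟩),
          Finset.card_erase_of_mem ha, ht]
        rfl
      · intro v hv hv'
        refine ind_false fun h => ?_
        have h1 := h a (by simp)
        have h2 := h b (by simp)
        grind
  have hzero : ∀ g, ∀ v ∈ t, ψ v g = 0 := by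
    intro g v hv
    by_cases hj : ∃ e, Φ.jump (fun k => ind (k = g)) e ≠ 0
    · obtain ⟨a, b, c, d, hab, hbc, -, hca, -, h1, h2, -⟩ :=
        (Φ.isEvenChain_jump fun k => ind (k = g)).exists_path hj
      obtain ⟨-, ha, hb⟩ := (hH a b).1 hab
      obtain ⟨-, -, hc⟩ := (hH b c).1 hbc
      have za := hψinc a ha g (Φ.inc_of_jump h1 (by simp))
      have zb := hψinc b hb g (Φ.inc_of_jump h1 (by simp))
      have zc := hψinc c hc g (Φ.inc_of_jump h2 (by simp))
      by_cases hmem : v ∈ ({a, b, c} : Finset V)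
      · simp only [Finset.mem_insert, Finset.mem_singleton] at hmem
        rcases hmem with rfl | rfl | rfl <;> assumption
      · have hcard : ({a, b, c} : Finset V).card = 3 :=
          Finset.card_eq_three.2 ⟨a, b, c, hab.ne, hca.symm, hbc.ne, rfl⟩
        have heq : insert v {a, b, c} = t := by
          refine Finset.eq_of_subset_of_card_le (fun w hw => ?_) ?_
          · simp only [Finset.mem_insert, Finset.mem_singleton] at hw
            rcases hw with rfl | rfl | rfl | rfl <;> assumption
          · rw [Finset.card_insert_of_notMem hmem, hcard, ht]
        have h := hsum g
        rw [← heq, Finset.sum_insert hmem, Finset.sum_eq_zero, add_zero] at h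
        · exact h
        · intro w hw
          simp only [Finset.mem_insert, Finset.mem_singleton] at hw
          rcases hw with rfl | rfl | rfl <;> assumption
    · push Not at hj
      have hfg : f = g := by
        have := Φ.const_of_no_jump (fun k => ind (k = g))
          (fun e => CharTwo.add_eq_zero.1 (hj e)) g f
        rw [ind_true rfl] at this
        exact ind_ne_zero_iff.1 (this ▸ one_ne_zero)
      rw [← hfg]
      exact hψf v hv
  obtain ⟨v, hv⟩ : t.Nonempty := Finset.card_pos.1 (by omega)
  obtain ⟨a, b, c, h1, -, -, h⟩ := Finset.card_eq_three.1 (hcl v hv).card_eq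
  have hab : H.Adj a b := (hcl v hv).isClique (by simp [h]) (by simp [h]) h1
  have h4 := hψ v hv ⟨s(a, b), hab⟩
  rw [hzero _ v hv, hzero _ v hv, ind_true (by simp [h])] at h4
  exact absurd h4 (by decide)

namespace PolyDrawing

variable {G : SimpleGraph V} (D : PolyDrawing G)

/-- The restriction of a drawing to a subgraph. -/
def restrict {H : SimpleGraph V} (h : H ≤ G) : PolyDrawing H where
  vtx := D.vtx
  src e := D.src ⟨e.1, edgeSet_mono h e.2⟩
  tgt e := D.tgt ⟨e.1, edgeSet_mono h e.2⟩
  len e := D.len ⟨e.1, edgeSet_mono h e.2⟩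
  pt e := D.pt ⟨e.1, edgeSet_mono h e.2⟩
  mk_eq e := D.mk_eq _
  vtx_inj := D.vtx_inj
  len_pos e := D.len_pos _
  pt_zero e := D.pt_zero _
  pt_len e := D.pt_len _
  pt_ne_vtx e := D.pt_ne_vtx _
  pt_inj e i e' j h0 hi hj heq := by
    have := D.pt_inj _ _ _ _ h0 hi hj heq
    exact ⟨Subtype.ext (Subtype.mk.inj this.1), this.2⟩
  seg_inter e i e' j hi hj hne :=
    D.seg_inter _ _ _ _ hi hj fun heq => hne (Subtype.ext (Subtype.mk.inj heq))
  vtx_mem e i v := D.vtx_mem _ _ _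

theorem nodes_restrict {H : SimpleGraph V} (h : H ≤ G) : (D.restrict h).nodes ⊆ D.nodes := by
  rintro z (⟨v, rfl⟩ | ⟨e, i, hi, rfl⟩)
  · exact Or.inl ⟨v, rfl⟩
  · exact Or.inr ⟨_, i, hi, rfl⟩

variable [Finite V]

theorem support_restrict [Finite G.edgeSet] {H : SimpleGraph V} [Finite H.edgeSet] (h : H ≤ G)
    (hre : D.nodes.InjOn Complex.re) :
    ((D.restrict h).segmentGraph (hre.mono (D.nodes_restrict h))).support ⊆
      (D.segmentGraph hre).support := by
  rintro z (hz | hz)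
  · exact Or.inl (D.nodes_restrict h hz)
  · obtain ⟨⟨e, i⟩, hz⟩ := Set.mem_iUnion.1 hz
    exact Or.inr (Set.mem_iUnion.2 ⟨⟨⟨e.1, edgeSet_mono h e.2⟩, i⟩, hz⟩)

/-- At most three pairwise adjacent vertices lie on the boundary of a face. -/
theorem card_le_three [Fintype G.edgeSet] (hre : D.nodes.InjOn Complex.re)
    (f : (D.segmentGraph hre).faces) {t : Finset V} (hcl : G.IsClique t)
    (hinc : ∀ v ∈ t, (D.faceSystem hre).inc v f) : t.card ≤ 3 := by
  classical
  by_contra! hcon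
  obtain ⟨t', htt, ht⟩ := Finset.exists_subset_card_eq (s := t) (n := 4) (by omega)
  let H : SimpleGraph V := SimpleGraph.mk (fun a b => a ≠ b ∧ a ∈ t' ∧ b ∈ t')
    ⟨fun a b h => ⟨h.1.symm, h.2.2, h.2.1⟩⟩ ⟨fun a h => h.1 rfl⟩
  have hHG : H ≤ G := fun a b h => hcl (htt h.2.1) (htt h.2.2) h.1
  have : Fintype H.edgeSet := Fintype.ofInjective _ (Set.inclusion_injective (edgeSet_mono hHG))
  let Γ := (D.restrict hHG).segmentGraph (hre.mono (D.nodes_restrict hHG))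
  obtain ⟨f, z, hz, rfl⟩ := f
  have hz' : z ∉ Γ.support := fun h => hz (D.support_restrict hHG hre h)
  obtain ⟨v, hv, hvf⟩ := ((D.restrict hHG).faceSystem
    (hre.mono (D.nodes_restrict hHG))).exists_not_inc ht (fun a b => Iff.rfl)
    ⟨Γ.face z, z, hz', rfl⟩
  refine hvf (closure_mono ?_ (hinc v (htt hv)))
  exact connectedComponentIn_mono _ (Set.compl_subset_compl.2 (D.support_restrict hHG hre))

end PolyDrawing

/-- There is a chain of `n` steps from `a` to `b`. -/
def StepChain {α : Type*} (R : α → α → Prop) (n : ℕ) (a b : α) : Prop :=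
  ∃ p : ℕ → α, p 0 = a ∧ p n = b ∧ ∀ i < n, R (p i) (p (i + 1))

namespace StepChain

variable {α : Type*} {R : α → α → Prop}

theorem trans {m n : ℕ} {a b c : α} (h1 : StepChain R m a b) (h2 : StepChain R n b c) :
    StepChain R (m + n) a c := by
  obtain ⟨p, rfl, rfl, hp⟩ := h1
  obtain ⟨q, hq0, rfl, hq⟩ := h2
  refine ⟨fun i => if i < m then p i else q (i - m), ?_, by simp, fun i hi => ?_⟩
  · by_cases h : 0 < m
    · simp [h]
    · obtain rfl : m = 0 := by omega
      simp [hq0]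
  · by_cases h : i + 1 < m
    · simp [h, show i < m by omega, hp i (by omega)]
    · by_cases h' : i < m
      · obtain rfl : m = i + 1 := by omega
        simpa [hq0] using hp i (by omega)
      · have := hq (i - m) (by omega)
        simpa [h, h', show i + 1 - m = i - m + 1 by omega] using this

theorem single {a b : α} (h : R a b) : StepChain R 1 a b :=
  ⟨fun i => if i = 0 then a else b, by simp, by simp, fun i hi => by simp_all⟩

theorem exists_of_reflTransGen {a b : α} (h : Relation.ReflTransGen R a b) :
    ∃ n, StepChain R n a b := by
  induction h with
  | refl => exact ⟨0, fun _ => a, rfl, rfl, by simp⟩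
  | tail _ h ih =>
    obtain ⟨n, hn⟩ := ih
    exact ⟨n + 1, hn.trans (single h)⟩

theorem of_le {k : ℕ} {p : ℕ → α} (hp : ∀ i < k, R (p i) (p (i + 1))) {i j : ℕ} (hij : i ≤ j)
    (hj : j ≤ k) : StepChain R (j - i) (p i) (p j) :=
  ⟨fun l => p (i + l), rfl, congrArg p (by omega), fun l hl => hp (i + l) (by omega)⟩

end StepChain

/-- Two segments with a common endpoint which meet in another point overlap. -/
theorem segment_subset_union_of_mem {x y w z : ℂ} (h1 : z ∈ segment ℝ x y)
    (h2 : z ∈ segment ℝ y w) (hz : z ≠ y) :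
    segment ℝ x w ⊆ segment ℝ x y ∪ segment ℝ y w := by
  rw [segment_symm ℝ x y] at h1 ⊢
  rw [segment_eq_image'] at h1 h2
  obtain ⟨s, ⟨hs0, hs1⟩, rfl⟩ := h1
  obtain ⟨r, ⟨hr0, hr1⟩, hr⟩ := h2
  simp only at hr hz
  have hs : 0 < s := lt_of_le_of_ne hs0 (by rintro rfl; simp at hz)
  have hr' : 0 < r := lt_of_le_of_ne hr0 (by rintro rfl; exact hz (by simpa using hr.symm))
  have key : (r : ℂ) * (w - y) = s * (x - y) := by simpa using hr
  have hsC : (s : ℂ) ≠ 0 := by exact_mod_cast hs.ne'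
  have hrC : (r : ℂ) ≠ 0 := by exact_mod_cast hr'.ne'
  rintro u hu
  rw [segment_eq_image'] at hu
  obtain ⟨c, ⟨hc0, hc1⟩, rfl⟩ := hu
  rcases le_total r s with h | h
  · right
    rw [segment_eq_image']
    refine ⟨(1 - c) * (r / s) + c, ⟨?_, ?_⟩, ?_⟩
    · have : 0 ≤ r / s := by positivity
      nlinarith
    · have : r / s ≤ 1 := (div_le_one hs).2 h
      nlinarith
    · have hx : x = y + (r / s : ℂ) * (w - y) := by field_simp; linear_combination -key
      simp only [Complex.real_smul]
      push_cast
      rw [hx]; ring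
  · left
    rw [segment_eq_image']
    refine ⟨(1 - c) + c * (s / r), ⟨?_, ?_⟩, ?_⟩
    · have : 0 ≤ s / r := by positivity
      nlinarith
    · have : s / r ≤ 1 := (div_le_one hr').2 h
      nlinarith
    · have hw : w = y + (s / r : ℂ) * (x - y) := by field_simp; linear_combination key
      simp only [Complex.real_smul]
      push_cast
      rw [hw]; ring

/-- A polygonal line whose segments meet only in the corner of two consecutive ones. -/
structure IsSimplePolyline (k : ℕ) (p : ℕ → ℂ) : Prop where
  inter : ∀ i j, i < j → j < k → ∀ z ∈ segment ℝ (p i) (p (i + 1)),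
    z ∈ segment ℝ (p j) (p (j + 1)) → j = i + 1 ∧ z = p j
  ne : ∀ i j, i < j → j ≤ k → p i ≠ p j

/-- Points joined by a polygonal line inside a set. -/
def PolyJoined (S : Set ℂ) : ℂ → ℂ → Prop :=
  Relation.ReflTransGen fun x y => segment ℝ x y ⊆ S

theorem PolyJoined.exists_simple {S : Set ℂ} {a b : ℂ} (h : PolyJoined S a b) :
    ∃ k p, IsSimplePolyline k p ∧ p 0 = a ∧ p k = b ∧
      ∀ i < k, segment ℝ (p i) (p (i + 1)) ⊆ S := by
  classical
  let R : ℂ → ℂ → Prop := fun x y => segment ℝ x y ⊆ S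
  have hex : ∃ n, StepChain R n a b := StepChain.exists_of_reflTransGen h
  obtain ⟨p, h0, hk, hp⟩ := Nat.find_spec hex
  set k := Nat.find hex with hkdef
  have hmin : ∀ {i j m}, i ≤ j → j ≤ k →
      StepChain R m (p i) (p j) → j ≤ i + m := by
    intro i j m hij hj hm
    have h1 := StepChain.of_le (R := R) hp (Nat.zero_le i) (hij.trans hj)
    have h2 := StepChain.of_le (R := R) hp hj le_rfl
    rw [h0] at h1
    rw [hk] at h2
    have := Nat.find_min' hex ((h1.trans hm).trans h2)
    omega
  have hshort : ∀ {i x}, i < k → x ∈ segment ℝ (p i) (p (i + 1)) →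
      segment ℝ (p i) x ⊆ S ∧ segment ℝ x (p (i + 1)) ⊆ S := by
    intro i x hi hx
    exact ⟨((convex_segment _ _).segment_subset (left_mem_segment ..) hx).trans (hp i hi),
      ((convex_segment _ _).segment_subset hx (right_mem_segment ..)).trans (hp i hi)⟩
  refine ⟨k, p, ⟨?_, ?_⟩, h0, hk, hp⟩
  · intro i j hij hj z hz hz'
    have hji : j = i + 1 := by
      have := hmin (by omega) (by omega)
        ((StepChain.single (R := R) (hshort (by omega) hz).1).trans
          (StepChain.single (R := R) (hshort hj hz').2) : StepChain _ _ (p i) (p (j + 1)))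
      omega
    refine ⟨hji, ?_⟩
    subst hji
    by_contra hne
    have hsub := (segment_subset_union_of_mem hz hz' hne).trans
      (Set.union_subset (hp i (by omega)) (hp (i + 1) hj))
    have := hmin (i := i) (j := i + 1 + 1) (by omega) (by omega) (StepChain.single (R := R) hsub)
    omega
  · intro i j hij hj heq
    have := hmin (m := 0) hij.le hj ⟨fun _ => p i, rfl, heq, by simp⟩
    omega

/-- A set homeomorphic to an interval, with its two ends. -/
def IsArc (A : Set ℂ) (a b : ℂ) : Prop :=
  ∃ γ : ℝ → ℂ, ContinuousOn γ (Set.Icc 0 1) ∧ Set.InjOn γ (Set.Icc 0 1) ∧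
    γ 0 = a ∧ γ 1 = b ∧ A = γ '' Set.Icc 0 1

theorem IsArc.symm {A : Set ℂ} {a b : ℂ} (h : IsArc A a b) : IsArc A b a := by
  obtain ⟨γ, hc, hi, h0, h1, rfl⟩ := h
  have hm : Set.MapsTo (fun t : ℝ => 1 - t) (Set.Icc 0 1) (Set.Icc 0 1) :=
    fun t ht => ⟨by linarith [ht.2], by linarith [ht.1]⟩
  refine ⟨fun t => γ (1 - t), hc.comp (by fun_prop) hm,
    hi.comp (fun s _ t _ h => by simpa using h) hm, by simpa, by simpa, ?_⟩
  ext z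
  constructor
  · rintro ⟨t, ht, rfl⟩
    exact ⟨1 - t, hm ht, by simp⟩
  · rintro ⟨t, ht, rfl⟩
    exact ⟨1 - t, hm ht, rfl⟩

theorem isArc_segment {a b : ℂ} (h : a ≠ b) : IsArc (segment ℝ a b) a b := by
  refine ⟨AffineMap.lineMap a b, (AffineMap.lineMap_continuous).continuousOn,
    (AffineMap.lineMap_injective ℝ h).injOn, by simp, by simp, segment_eq_image_lineMap ..⟩

theorem IsArc.union {A B : Set ℂ} {a b c : ℂ} (hA : IsArc A a b) (hB : IsArc B b c)
    (hAB : A ∩ B ⊆ {b}) : IsArc (A ∪ B) a c := by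
  obtain ⟨γ, hc, hi, h0, h1, rfl⟩ := hA
  obtain ⟨δ, hc', hi', h0', h1', rfl⟩ := hB
  have e1 : ∀ t ∈ Set.Icc (0 : ℝ) 1, t ≤ 1 / 2 → 2 * t ∈ Set.Icc (0 : ℝ) 1 :=
    fun t ht h => ⟨by linarith [ht.1], by linarith⟩
  have e2 : ∀ t ∈ Set.Icc (0 : ℝ) 1, 1 / 2 ≤ t → 2 * t - 1 ∈ Set.Icc (0 : ℝ) 1 :=
    fun t ht h => ⟨by linarith, by linarith [ht.2]⟩
  have hmix : ∀ s ∈ Set.Icc (0 : ℝ) 1, ∀ t ∈ Set.Icc (0 : ℝ) 1, s ≤ 1 / 2 → 1 / 2 < t →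
      γ (2 * s) ≠ δ (2 * t - 1) := by
    intro s hs t ht h2 h3 heq
    have hb : δ (2 * t - 1) = b := hAB ⟨⟨_, e1 s hs h2, heq⟩, ⟨_, e2 t ht h3.le, rfl⟩⟩
    have := hi' (e2 t ht h3.le) ⟨le_rfl, zero_le_one⟩ (hb.trans h0'.symm)
    linarith
  refine ⟨fun t => if t ≤ 1 / 2 then γ (2 * t) else δ (2 * t - 1), ?_, ?_, ?_, ?_, ?_⟩
  · refine ContinuousOn.if ?_ ?_ ?_
    · rintro t ⟨ht, hfr⟩
      have : t = 1 / 2 := by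
        exact frontier_le_subset_eq (f := fun t : ℝ => t) (g := fun _ => (1 / 2 : ℝ))
          continuous_id continuous_const hfr
      subst this
      norm_num [h1, h0']
    · refine (hc.comp (by fun_prop : ContinuousOn (fun t : ℝ => 2 * t) _) ?_)
      rintro t ⟨ht, h⟩
      exact e1 t ht (isClosed_Iic.closure_subset h)
    · refine (hc'.comp (by fun_prop : ContinuousOn (fun t : ℝ => 2 * t - 1) _) ?_)
      rintro t ⟨ht, h⟩
      simp only [not_le] at h
      exact e2 t ht (closure_lt_subset_le continuous_const continuous_id h)
  · intro s hs t ht heq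
    by_cases h2 : s ≤ 1 / 2 <;> by_cases h3 : t ≤ 1 / 2
    · simp only [h2, h3, if_true] at heq
      linarith [hi (e1 s hs h2) (e1 t ht h3) heq]
    · simp only [h2, h3, if_true, if_false] at heq
      exact absurd heq (hmix s hs t ht h2 (not_le.1 h3))
    · simp only [h2, h3, if_true, if_false] at heq
      exact absurd heq.symm (hmix t ht s hs h3 (not_le.1 h2))
    · simp only [h2, h3, if_false] at heq
      linarith [hi' (e2 s hs (not_le.1 h2).le) (e2 t ht (not_le.1 h3).le) heq]
  · simp [h0]
  · norm_num [h1']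
  · ext z
    constructor
    · rintro (⟨t, ht, rfl⟩ | ⟨t, ht, rfl⟩)
      · refine ⟨t / 2, ⟨by linarith [ht.1], by linarith [ht.2]⟩, ?_⟩
        beta_reduce
        rw [if_pos (by linarith [ht.2])]
        congr 1; ring
      · rcases ht.1.eq_or_lt with rfl | h
        · refine ⟨1 / 2, by norm_num, ?_⟩
          norm_num [h1, h0']
        · refine ⟨(t + 1) / 2, ⟨by linarith [ht.1], by linarith [ht.2]⟩, ?_⟩
          beta_reduce
          rw [if_neg (by linarith)]
          congr 1; ring
    · rintro ⟨t, ht, rfl⟩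
      by_cases h : t ≤ 1 / 2
      · simp only [h, if_true]
        exact Or.inl ⟨_, e1 t ht h, rfl⟩
      · simp only [h, if_false]
        exact Or.inr ⟨_, e2 t ht (not_le.1 h).le, rfl⟩

theorem IsSimplePolyline.isArc {k : ℕ} {p : ℕ → ℂ} (h : IsSimplePolyline k p) (hk : 0 < k) :
    IsArc (⋃ i ∈ Set.Iio k, segment ℝ (p i) (p (i + 1))) (p 0) (p k) := by
  induction k, hk using Nat.le_induction with
  | base =>
    have : Set.Iio 1 = {0} := by ext; simp
    simpa [this] using isArc_segment (h.ne 0 1 one_pos le_rfl)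
  | succ k hk ih =>
    have hs : Set.Iio (k + 1) = Set.Iio k ∪ {k} := by ext; grind
    rw [hs, Set.biUnion_union, Set.biUnion_singleton]
    refine (ih ⟨fun i j hij hj => h.inter i j hij (by omega),
      fun i j hij hj => h.ne i j hij (by omega)⟩).union
      (isArc_segment (h.ne k (k + 1) (by omega) le_rfl)) ?_
    rintro z ⟨hz, hz'⟩
    obtain ⟨i, hi, hz⟩ := Set.mem_iUnion₂.1 hz
    exact (h.inter i k hi (by omega) z hz hz').2

/-- Disjoint tubes around the edges contain a polygonal drawing. -/
theorem exists_polyDrawing (G : SimpleGraph V) (vtx : V → ℂ) (hinj : Function.Injective vtx)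
    (S : Sym2 V → Set ℂ) (hS : ∀ u v, G.Adj u v → PolyJoined (S s(u, v)) (vtx u) (vtx v))
    (hdisj : ∀ e ∈ G.edgeSet, ∀ e' ∈ G.edgeSet, e ≠ e' → S e ∩ S e' ⊆ Set.range vtx)
    (hvtx : ∀ e ∈ G.edgeSet, ∀ v, vtx v ∈ S e → v ∈ e) : Nonempty (PolyDrawing G) := by
  have hex : ∀ e : G.edgeSet, ∃ u v k p, s(u, v) = e.1 ∧ IsSimplePolyline k p ∧ p 0 = vtx u ∧
      p k = vtx v ∧ ∀ i < k, segment ℝ (p i) (p (i + 1)) ⊆ S e.1 := by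
    rintro ⟨⟨u, v⟩, h⟩
    obtain ⟨k, p, h1, h2, h3, h4⟩ := (hS u v h).exists_simple
    exact ⟨u, v, k, p, rfl, h1, h2, h3, h4⟩
  choose src tgt len pt hmk hsimple h0 hlen hsub using hex
  have hpos : ∀ e, 0 < len e := by
    intro e
    by_contra! hcon
    have hl : len e = 0 := by omega
    have h := hlen e
    rw [hl, h0] at h
    have hadj : s(src e, tgt e) ∈ G.edgeSet := by rw [hmk]; exact e.2
    exact G.ne_of_adj hadj (hinj h)
  have hend : ∀ (e : G.edgeSet) v, vtx v ∈ S e.1 → vtx v = pt e 0 ∨ vtx v = pt e (len e) := by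
    intro e v h
    have := hvtx e.1 e.2 v h
    rw [← hmk e, Sym2.mem_iff] at this
    rw [h0, hlen]
    rcases this with rfl | rfl
    · exact Or.inl rfl
    · exact Or.inr rfl
  have hptS : ∀ e i, i ≤ len e → pt e i ∈ S e.1 := by
    intro e i hi
    rcases hi.lt_or_eq with hi | rfl
    · exact hsub e i hi (left_mem_segment ..)
    · have := hpos e
      have h := hsub e (len e - 1) (by omega) (right_mem_segment ..)
      rwa [show len e - 1 + 1 = len e by omega] at h
  have hmem : ∀ e i v, i < len e → vtx v ∈ segment ℝ (pt e i) (pt e (i + 1)) →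
      vtx v = pt e i ∨ vtx v = pt e (i + 1) := by
    intro e i v hi hv
    rcases hend e v (hsub e i hi hv) with h | h
    · rcases Nat.eq_zero_or_pos i with rfl | hi0
      · exact Or.inl h
      · exact Or.inl ((hsimple e).inter 0 i hi0 hi _ (h ▸ left_mem_segment ..) hv).2
    · by_cases hi1 : i + 1 = len e
      · exact Or.inr (hi1 ▸ h)
      · have h2 : vtx v ∈ segment ℝ (pt e (len e - 1)) (pt e (len e - 1 + 1)) := by
          rw [show len e - 1 + 1 = len e by omega, h]
          exact right_mem_segment ..
        have h3 := (hsimple e).inter i (len e - 1) (by omega) (by omega) _ hv h2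
        rw [h3.1] at h3
        exact Or.inr h3.2
  have hne_vtx : ∀ e i v, 0 < i → i < len e → pt e i ≠ vtx v := by
    intro e i v hi0 hi heq
    rcases hend e v (heq ▸ hptS e i hi.le) with h | h
    · exact (hsimple e).ne 0 i hi0 hi.le (h.symm.trans heq.symm)
    · exact (hsimple e).ne i _ hi le_rfl (heq.trans h)
  exact ⟨{ vtx := vtx, src := src, tgt := tgt, len := len, pt := pt, mk_eq := hmk
           vtx_inj := hinj, len_pos := hpos, pt_zero := h0, pt_len := hlen
           pt_ne_vtx := hne_vtx, vtx_mem := hmem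
           pt_inj := by
            intro e i e' j hi0 hi hj heq
            by_cases he : e = e'
            · subst he
              refine ⟨rfl, ?_⟩
              by_contra hne
              rcases lt_or_gt_of_ne hne with h | h
              · exact (hsimple e).ne i j h hj heq
              · exact (hsimple e).ne j i h hi.le heq.symm
            · obtain ⟨v, hv⟩ := hdisj e.1 e.2 e'.1 e'.2 (fun h => he (Subtype.ext h))
                ⟨hptS e i hi.le, heq ▸ hptS e' j hj⟩
              exact (hne_vtx e i v hi0 hi hv.symm).elim
           seg_inter := by
            intro e i e' j hi hj hne z hz hz'
            by_cases he : e = e'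
            · subst he
              rcases lt_or_gt_of_ne (hne rfl) with h | h
              · obtain ⟨rfl, h2⟩ := (hsimple e).inter i j h hj z hz hz'
                exact Or.inr h2
              · exact Or.inl ((hsimple e).inter j i h hi z hz' hz).2
            · obtain ⟨v, rfl⟩ := hdisj e.1 e.2 e'.1 e'.2 (fun h => he (Subtype.ext h))
                ⟨hsub e i hi hz, hsub e' j hj hz'⟩
              exact hmem e i v hi hz }⟩

namespace PolyDrawing

variable {G : SimpleGraph V} (D : PolyDrawing G)

/-- The curve representing an edge. -/
def curve (e : G.edgeSet) : Set ℂ := ⋃ i ∈ Set.Iio (D.len e), segment ℝ (D.pt e i) (D.pt e (i + 1))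

theorem vtx_mem_curve {e : G.edgeSet} {v : V} (h : D.vtx v ∈ D.curve e) : v ∈ e.1 := by
  obtain ⟨i, hi, h⟩ := Set.mem_iUnion₂.1 h
  rw [← D.mk_eq e, Sym2.mem_iff]
  have hi' : i < D.len e := hi
  rcases D.vtx_mem e i v hi h with h | h
  · rcases Nat.eq_zero_or_pos i with rfl | h0
    · rw [D.pt_zero] at h
      exact Or.inl (D.vtx_inj h)
    · exact (D.pt_ne_vtx e i v h0 hi h.symm).elim
  · rcases Nat.lt_or_ge (i + 1) (D.len e) with h0 | h0
    · exact (D.pt_ne_vtx e (i + 1) v (by omega) h0 h.symm).elim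
    · rw [show i + 1 = D.len e by omega, D.pt_len] at h
      exact Or.inr (D.vtx_inj h)

theorem pt_mem_range_or (e : G.edgeSet) {i : ℕ} (hi : i ≤ D.len e) :
    D.pt e i ∈ Set.range D.vtx ∨ 0 < i ∧ i < D.len e := by
  rcases Nat.eq_zero_or_pos i with rfl | h0
  · exact Or.inl ⟨_, (D.pt_zero e).symm⟩
  · rcases hi.lt_or_eq with h | rfl
    · exact Or.inr ⟨h0, h⟩
    · exact Or.inl ⟨_, (D.pt_len e).symm⟩

theorem curve_inter {e e' : G.edgeSet} (he : e ≠ e') :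
    D.curve e ∩ D.curve e' ⊆ Set.range D.vtx := by
  rintro z ⟨hz, hz'⟩
  obtain ⟨i, hi, hz⟩ := Set.mem_iUnion₂.1 hz
  obtain ⟨j, hj, hz'⟩ := Set.mem_iUnion₂.1 hz'
  obtain ⟨k, hk, rfl⟩ : ∃ k ≤ D.len e, z = D.pt e k := by
    rcases D.seg_inter e i e' j hi hj (fun h => (he h).elim) z hz hz' with h | h
    · exact ⟨i, le_of_lt hi, h⟩
    · exact ⟨i + 1, hi, h⟩
  obtain ⟨l, hl, hkl⟩ : ∃ l ≤ D.len e', D.pt e k = D.pt e' l := by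
    rcases D.seg_inter e' j e i hj hi (fun h => (he h.symm).elim) _ hz' hz with h | h
    · exact ⟨j, le_of_lt hj, h⟩
    · exact ⟨j + 1, hj, h⟩
  rcases D.pt_mem_range_or e hk with h | h
  · exact h
  · exact (he (D.pt_inj e k e' l h.1 h.2 hl hkl).1).elim

theorem isSimplePolyline (e : G.edgeSet) : IsSimplePolyline (D.len e) (D.pt e) := by
  have hne : ∀ i j, i < j → j ≤ D.len e → D.pt e i ≠ D.pt e j := by
    intro i j hij hj heq
    rcases Nat.eq_zero_or_pos i with rfl | h0
    · rcases hj.lt_or_eq with hj | rfl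
      · exact absurd (D.pt_inj e j e 0 hij hj (Nat.zero_le _) heq.symm).2 hij.ne'
      · rw [D.pt_zero, D.pt_len] at heq
        have hadj : s(D.src e, D.tgt e) ∈ G.edgeSet := by rw [D.mk_eq]; exact e.2
        exact G.ne_of_adj hadj (D.vtx_inj heq)
    · exact absurd (D.pt_inj e i e j h0 (by omega) hj heq).2 hij.ne
  refine ⟨fun i j hij hj z hz hz' => ?_, hne⟩
  obtain ⟨k, hk, hk', hzk⟩ : ∃ k, (k = i ∨ k = i + 1) ∧ k ≤ D.len e ∧ z = D.pt e k := by
    rcases D.seg_inter e i e j (by omega) hj (fun _ => hij.ne) z hz hz' with h | h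
    · exact ⟨i, Or.inl rfl, by omega, h⟩
    · exact ⟨i + 1, Or.inr rfl, by omega, h⟩
  obtain ⟨l, hl, hl', hzl⟩ : ∃ l, (l = j ∨ l = j + 1) ∧ l ≤ D.len e ∧ z = D.pt e l := by
    rcases D.seg_inter e j e i hj (by omega) (fun _ => hij.ne') z hz' hz with h | h
    · exact ⟨j, Or.inl rfl, by omega, h⟩
    · exact ⟨j + 1, Or.inr rfl, by omega, h⟩
  have hkl : k = l := by
    by_contra hcon
    rcases lt_or_gt_of_ne hcon with h | h
    · exact hne k l h hl' (hzk.symm.trans hzl)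
    · exact hne l k h hk' (hzl.symm.trans hzk)
  have : j = i + 1 ∧ k = j := by omega
  exact ⟨this.1, this.2 ▸ hzk⟩

/-- A polygonal drawing is a plane embedding. -/
theorem planarGraph (D : PolyDrawing G) : PlanarGraph G := by
  classical
  have hinter : ∀ {e e' : G.edgeSet} {z}, e ≠ e' → z ∈ D.curve e → z ∈ D.curve e' →
      ∃ v ∈ e.1, z = D.vtx v := by
    intro e e' z hne h1 h2
    obtain ⟨v, rfl⟩ := D.curve_inter hne ⟨h1, h2⟩
    exact ⟨v, D.vtx_mem_curve h1, rfl⟩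
  refine ⟨{ vtx := D.vtx
            arc := fun u v => if h : s(u, v) ∈ G.edgeSet then D.curve ⟨s(u, v), h⟩ else ∅
            vtx_inj := D.vtx_inj
            arc_symm := ?_, arc_curve := ?_, arc_inter := ?_, arc_vtx := ?_ }⟩
  · intro u v
    simp only [Sym2.eq_swap (a := u) (b := v)]
  · intro u v h
    change IsArc _ _ _
    rw [dif_pos (G.mem_edgeSet.2 h)]
    set e : G.edgeSet := ⟨s(u, v), G.mem_edgeSet.2 h⟩
    have harc := (D.isSimplePolyline e).isArc (D.len_pos e)
    rw [D.pt_zero, D.pt_len] at harc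
    rcases Sym2.eq_iff.1 (D.mk_eq e) with ⟨h1, h2⟩ | ⟨h1, h2⟩
    · rw [h1, h2] at harc
      exact harc
    · rw [h1, h2] at harc
      exact harc.symm
  · intro u v x y huv hxy hne z
    rw [dif_pos (G.mem_edgeSet.2 huv), dif_pos (G.mem_edgeSet.2 hxy)]
    rintro ⟨h1, h2⟩
    obtain ⟨a, ha, rfl⟩ := hinter (fun h => hne (Subtype.mk.inj h)) h1 h2
    obtain ⟨b, hb, hab⟩ := hinter (fun h => hne (Subtype.mk.inj h).symm) h2 h1
    obtain rfl := D.vtx_inj hab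
    simp only [Sym2.mem_iff] at ha hb
    refine ⟨?_, ?_⟩
    · rcases ha with rfl | rfl <;> simp
    · rcases hb with rfl | rfl <;> simp
  · intro u v h w hw
    rw [dif_pos (G.mem_edgeSet.2 h)] at hw
    exact Sym2.mem_iff.1 (D.vtx_mem_curve hw)

end PolyDrawing

theorem PolyJoined.mono {S T : Set ℂ} (h : S ⊆ T) {a b : ℂ} (hab : PolyJoined S a b) :
    PolyJoined T a b :=
  Relation.ReflTransGen.mono (fun _ _ hxy => hxy.trans h) _ _ hab

theorem PolyJoined.symm {S : Set ℂ} {a b : ℂ} (h : PolyJoined S a b) : PolyJoined S b a := by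
  induction h with
  | refl => exact Relation.ReflTransGen.refl
  | @tail x y _ hxy ih =>
    refine Relation.ReflTransGen.head ?_ ih
    rw [segment_symm]
    exact hxy

theorem polyJoined_of_segment {S : Set ℂ} {a b : ℂ} (h : segment ℝ a b ⊆ S) : PolyJoined S a b :=
  Relation.ReflTransGen.single h

theorem IsPreconnected.polyJoined {K S : Set ℂ} (hK : IsPreconnected K)
    (h : ∀ x ∈ K, ∀ᶠ y in 𝓝[K] x, segment ℝ x y ⊆ S) {a b : ℂ} (ha : a ∈ K) (hb : b ∈ K) :
    PolyJoined S a b := by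
  refine hK.induction₂ (PolyJoined S) (fun x hx => ?_) (fun _ _ _ _ _ _ => .trans)
    (fun _ _ _ _ => .symm) ha hb
  filter_upwards [h x hx] with y hy using polyJoined_of_segment hy

theorem IsOpen.polyJoined {U : Set ℂ} (hU : IsOpen U) (hc : IsPreconnected U) {a b : ℂ}
    (ha : a ∈ U) (hb : b ∈ U) : PolyJoined U a b := by
  refine hc.polyJoined (fun x hx => ?_) ha hb
  obtain ⟨r, hr, hsub⟩ := Metric.isOpen_iff.1 hU x hx
  filter_upwards [nhdsWithin_le_nhds (Metric.ball_mem_nhds x hr)] with y hy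
  exact ((convex_ball x r).segment_subset (Metric.mem_ball_self hr) hy).trans hsub

namespace PolyDrawing

variable {G : SimpleGraph V} (D : PolyDrawing G)

theorem polyJoined_curve {a b : V} (h : s(a, b) ∈ G.edgeSet) :
    PolyJoined (D.curve ⟨s(a, b), h⟩) (D.vtx a) (D.vtx b) := by
  set e : G.edgeSet := ⟨s(a, b), h⟩
  have hj : ∀ i ≤ D.len e, PolyJoined (D.curve e) (D.pt e 0) (D.pt e i) := by
    intro i hi
    induction i with
    | zero => exact Relation.ReflTransGen.refl
    | succ i ih =>
      refine (ih (by omega)).tail ?_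
      exact Set.subset_biUnion_of_mem (u := fun i => segment ℝ (D.pt e i) (D.pt e (i + 1)))
        (Set.mem_Iio.2 hi)
  have h1 := hj _ le_rfl
  rw [D.pt_zero, D.pt_len] at h1
  rcases Sym2.eq_iff.1 (D.mk_eq e) with ⟨h2, h3⟩ | ⟨h2, h3⟩
  · rwa [h2, h3] at h1
  · rw [h2, h3] at h1
    exact h1.symm

variable [Finite V] [Finite G.edgeSet] (hre : D.nodes.InjOn Complex.re)

theorem curve_subset_support (e : G.edgeSet) : D.curve e ⊆ (D.segmentGraph hre).support := by
  intro z hz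
  obtain ⟨i, hi, hz⟩ := Set.mem_iUnion₂.1 hz
  exact Or.inr (Set.mem_iUnion.2 ⟨⟨e, i, hi⟩, hz⟩)

/-- Two vertices on the boundary of a face can be joined by a new edge. -/
theorem planarGraph_of_inc {f : Set ℂ} (hf : f ∈ (D.segmentGraph hre).faces) {u w : V}
    (huw : u ≠ w) (hu : D.vtx u ∈ closure f) (hw : D.vtx w ∈ closure f) :
    PlanarGraph (G ⊔ fromEdgeSet {s(u, w)}) := by
  classical
  set Γ := D.segmentGraph hre
  have hnode : ∀ v, D.vtx v ∈ Γ.nodes := fun v => Or.inl ⟨v, rfl⟩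
  obtain ⟨p, hp, hup⟩ := Γ.exists_access (hnode u) hf hu
  obtain ⟨q, hq, hwq⟩ := Γ.exists_access (hnode w) hf hw
  have hfs : ∀ z ∈ f, z ∉ Γ.support := by
    obtain ⟨z, hz, rfl⟩ := hf
    exact fun x hx => Γ.face_subset z hx
  have hopen : IsOpen f := by
    obtain ⟨z, hz, rfl⟩ := hf
    exact Γ.isClosed_support.isOpen_compl.connectedComponentIn
  have hconn : IsPreconnected f := by
    obtain ⟨z, hz, rfl⟩ := hf
    exact isPreconnected_connectedComponentIn
  let N : Set ℂ := insert (D.vtx u) (insert (D.vtx w) f)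
  have hfN : f ⊆ N := fun z hz => Or.inr (Or.inr hz)
  have hN : PolyJoined N (D.vtx u) (D.vtx w) := by
    have h1 : PolyJoined N (D.vtx u) p := polyJoined_of_segment fun z hz => by
      rcases hup hz with h | h
      · exact Or.inl h
      · exact hfN h
    have h2 : PolyJoined N (D.vtx w) q := polyJoined_of_segment fun z hz => by
      rcases hwq hz with h | h
      · exact Or.inr (Or.inl h)
      · exact hfN h
    exact (h1.trans ((hopen.polyJoined hconn hp hq).mono hfN)).trans h2.symm
  let S : Sym2 V → Set ℂ := fun e => if h : e ∈ G.edgeSet then D.curve ⟨e, h⟩ else N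
  have hSG : ∀ e (h : e ∈ G.edgeSet), S e = D.curve ⟨e, h⟩ := fun e h => dif_pos h
  have hSN : ∀ e, e ∉ G.edgeSet → S e = N := fun e h => dif_neg h
  have hedge : ∀ e ∈ (G ⊔ fromEdgeSet {s(u, w)}).edgeSet, e ∉ G.edgeSet → e = s(u, w) := by
    intro e he hG
    rw [edgeSet_sup, edgeSet_fromEdgeSet] at he
    exact (he.resolve_left hG).1
  have hcross : ∀ (e : G.edgeSet), D.curve e ∩ N ⊆ Set.range D.vtx := by
    rintro e z ⟨hz, rfl | rfl | h⟩
    · exact ⟨_, rfl⟩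
    · exact ⟨_, rfl⟩
    · exact (hfs z h (D.curve_subset_support hre e hz)).elim
  refine PolyDrawing.planarGraph (Nonempty.some (exists_polyDrawing _ D.vtx D.vtx_inj S ?_ ?_ ?_))
  · intro a b hab
    by_cases h : s(a, b) ∈ G.edgeSet
    · rw [hSG _ h]
      exact D.polyJoined_curve h
    · rw [hSN _ h]
      rcases Sym2.eq_iff.1 (hedge _ hab h) with ⟨rfl, rfl⟩ | ⟨rfl, rfl⟩
      · exact hN
      · exact hN.symm
  · intro e he e' he' hne
    by_cases h : e ∈ G.edgeSet <;> by_cases h' : e' ∈ G.edgeSet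
    · rw [hSG _ h, hSG _ h']
      exact D.curve_inter fun heq => hne (Subtype.mk.inj heq)
    · rw [hSG _ h, hSN _ h']
      exact hcross _
    · rw [hSN _ h, hSG _ h', Set.inter_comm]
      exact hcross _
    · exact (hne ((hedge _ he h).trans (hedge _ he' h').symm)).elim
  · intro e he v hv
    by_cases h : e ∈ G.edgeSet
    · rw [hSG _ h] at hv
      exact D.vtx_mem_curve hv
    · rw [hSN _ h] at hv
      rw [hedge _ he h]
      rcases hv with hv | hv | hv
      · simp [D.vtx_inj hv]
      · simp [D.vtx_inj hv]
      · exact (hfs _ hv (Or.inl (hnode v))).elim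

end PolyDrawing

/-- A maximal planar graph with a polygonal drawing in general position. -/
theorem MaximalPlanar.isTriangular [Finite V] {G : SimpleGraph V} [Fintype G.edgeSet]
    (hG : MaximalPlanar G) (D : PolyDrawing G) (hre : D.nodes.InjOn Complex.re) :
    (D.faceSystem hre).IsTriangular := by
  have hadj : ∀ f u w, u ≠ w → (D.faceSystem hre).inc u f → (D.faceSystem hre).inc w f →
      G.Adj u w := by
    intro f u w hne hu hw
    by_contra hcon
    exact hG.2 u w hne hcon (D.planarGraph_of_inc hre f.2 hne hu hw)
  exact ⟨hadj, fun f t ht => D.card_le_three hre f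
    (fun u hu w hw hne => hadj f u w hne (ht u hu) (ht w hw)) ht⟩

/-- A path between the centres of two disjoint discs contains a connected piece meeting each of the
discs in a single point. -/
theorem exists_middle_piece {γ : ℝ → ℂ} (hγ : ContinuousOn γ (Set.Icc 0 1)) {R : ℝ} (hR : 0 < R)
    (hdist : 2 * R < dist (γ 0) (γ 1)) :
    ∃ K ⊆ γ '' Set.Icc 0 1, IsCompact K ∧ IsPreconnected K ∧ ∃ a ∈ K, ∃ b ∈ K,
      dist a (γ 0) = R ∧ dist b (γ 1) = R ∧ (∀ z ∈ K, dist z (γ 0) ≤ R → z = a) ∧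
        ∀ z ∈ K, dist z (γ 1) ≤ R → z = b := by
  have hcont : ∀ p, ContinuousOn (fun t => dist (γ t) p) (Set.Icc 0 1) := fun p =>
    (continuous_id.dist continuous_const).comp_continuousOn hγ
  have hcomp : ∀ p, ∀ s ∈ Set.Icc (0 : ℝ) 1,
      IsCompact (Set.Icc s 1 ∩ (fun t => dist (γ t) p) ⁻¹' Set.Iic R) := fun p s hs =>
    isCompact_Icc.of_isClosed_subset (((hcont p).mono
      (Set.Icc_subset_Icc_left hs.1)).preimage_isClosed_of_isClosed isClosed_Icc isClosed_Iic)
        Set.inter_subset_left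
  have h0 : (0 : ℝ) ∈ Set.Icc (0 : ℝ) 1 := by simp
  obtain ⟨s, ⟨hs, hsR⟩, hsmax⟩ := (hcomp (γ 0) 0 h0).exists_isGreatest
    ⟨0, h0, by simp [hR.le]⟩
  obtain ⟨t, ⟨ht, htR⟩, htmin⟩ := (hcomp (γ 1) s hs).exists_isLeast
    ⟨1, ⟨hs.2, le_rfl⟩, by simp [hR.le]⟩
  simp only [Set.mem_preimage, Set.mem_Iic] at hsR htR
  have hsub : Set.Icc s t ⊆ Set.Icc 0 1 := Set.Icc_subset_Icc hs.1 ht.2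
  have hs_eq : dist (γ s) (γ 0) = R := by
    obtain ⟨r, hr, hrR⟩ := intermediate_value_Icc hs.2
      ((hcont (γ 0)).mono (Set.Icc_subset_Icc_left hs.1))
      ⟨hsR, show R ≤ dist (γ 1) (γ 0) by rw [_root_.dist_comm]; linarith⟩
    have hle : r ≤ s := hsmax ⟨⟨hs.1.trans hr.1, hr.2⟩, hrR.le⟩
    rwa [le_antisymm hle hr.1] at hrR
  have ht_eq : dist (γ t) (γ 1) = R := by
    obtain ⟨r, hr, hrR⟩ := intermediate_value_Icc' ht.1 ((hcont (γ 1)).mono hsub)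
      ⟨htR, show R ≤ dist (γ s) (γ 1) by
        have := dist_triangle_left (γ 0) (γ 1) (γ s)
        linarith⟩
    have hle : t ≤ r := htmin ⟨⟨hr.1, hr.2.trans ht.2⟩, hrR.le⟩
    rwa [le_antisymm hr.2 hle] at hrR
  refine ⟨γ '' Set.Icc s t, Set.image_mono hsub, isCompact_Icc.image_of_continuousOn (hγ.mono hsub),
    isPreconnected_Icc.image _ (hγ.mono hsub), γ s, ⟨s, ⟨le_rfl, ht.1⟩, rfl⟩, γ t,
    ⟨t, ⟨ht.1, le_rfl⟩, rfl⟩, hs_eq, ht_eq, ?_, ?_⟩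
  · rintro _ ⟨r, hr, rfl⟩ hrR
    rw [le_antisymm (hsmax ⟨hsub hr, hrR⟩) hr.1]
  · rintro _ ⟨r, hr, rfl⟩ hrR
    rw [le_antisymm hr.2 (htmin ⟨⟨hr.1, hr.2.trans ht.2⟩, hrR⟩)]

theorem eventually_disjoint_thickening {K T : Set ℂ} (hK : IsCompact K) (hT : IsClosed T)
    (h : Disjoint K T) :
    ∀ᶠ δ in 𝓝[>] (0 : ℝ), Disjoint (Metric.thickening δ K) (Metric.thickening δ T) := by
  obtain ⟨r, hr, hd⟩ := h.exists_thickenings hK hT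
  filter_upwards [Ioc_mem_nhdsGT hr] with δ hδ
  exact hd.mono (Metric.thickening_mono hδ.2 _) (Metric.thickening_mono hδ.2 _)

/-- Two radii of a circle meet only in its centre. -/
theorem eq_center_of_mem_radii {p a b z : ℂ} {R : ℝ} (ha : dist a p = R)
    (hb : dist b p = R) (hza : z ∈ segment ℝ p a) (hzb : z ∈ segment ℝ p b) (hab : a ≠ b) :
    z = p := by
  rw [segment_eq_image_lineMap] at hza hzb
  obtain ⟨t, ht, rfl⟩ := hza
  obtain ⟨t', ht', h⟩ := hzb
  have h1 := congrArg (fun z => Dist.dist z p) h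
  simp only [dist_lineMap_left, Real.norm_eq_abs, abs_of_nonneg ht.1, abs_of_nonneg ht'.1,
    _root_.dist_comm p, ha, hb] at h1
  rcases mul_eq_mul_right_iff.1 h1 with rfl | hR
  · by_cases h0 : t' = 0
    · simp [h0]
    · simp only [AffineMap.lineMap_apply, vsub_eq_sub, vadd_eq_add, add_left_inj] at h
      exact (hab (sub_left_injective (smul_right_injective ℂ h0 h)).symm).elim
  · rw [hR, dist_eq_zero] at ha hb
    exact (hab (ha.trans hb.symm)).elim

/-- A radius of a circle meets the circle only in its endpoint. -/
theorem eq_of_mem_radius {p a z : ℂ} (hz : z ∈ segment ℝ p a) (h : dist z p = dist a p) :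
    z = a := by
  rw [segment_eq_image_lineMap] at hz
  obtain ⟨t, ht, rfl⟩ := hz
  rw [dist_lineMap_left, Real.norm_eq_abs, abs_of_nonneg ht.1, _root_.dist_comm p] at h
  rcases mul_left_eq_self₀.1 h with rfl | h0
  · simp
  · rw [dist_eq_zero.1 h0]; simp

theorem dist_le_of_mem_segment {p a z : ℂ} (hz : z ∈ segment ℝ p a) : dist z p ≤ dist a p :=
  (convex_closedBall p (dist a p)).segment_subset (Metric.mem_closedBall_self dist_nonneg)
    (Metric.mem_closedBall.2 le_rfl) hz

theorem isCompact_segment (a b : ℂ) : IsCompact (segment ℝ a b) := by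
  rw [segment_eq_image_lineMap]
  exact isCompact_Icc.image AffineMap.lineMap_continuous

namespace PlaneEmbedding

variable {G : SimpleGraph V} (E : PlaneEmbedding G)

/-- The arc of an edge. -/
def edgeArc : Sym2 V → Set ℂ := Sym2.lift ⟨E.arc, E.arc_symm⟩

theorem isCompact_edgeArc {e : Sym2 V} (he : e ∈ G.edgeSet) : IsCompact (E.edgeArc e) := by
  induction e with
  | h u v =>
    obtain ⟨γ, hγ, -, -, -, h⟩ := E.arc_curve (G.mem_edgeSet.1 he)
    change IsCompact (E.arc u v)
    exact h ▸ isCompact_Icc.image_of_continuousOn hγ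

theorem mem_of_vtx_mem_edgeArc {e : Sym2 V} (he : e ∈ G.edgeSet) {v : V}
    (hv : E.vtx v ∈ E.edgeArc e) : v ∈ e := by
  induction e with
  | h a b => exact Sym2.mem_iff.2 (E.arc_vtx (G.mem_edgeSet.1 he) v hv)

theorem exists_vtx_of_mem_edgeArc {e e' : Sym2 V} (he : e ∈ G.edgeSet) (he' : e' ∈ G.edgeSet)
    (hne : e ≠ e') {z : ℂ} (hz : z ∈ E.edgeArc e) (hz' : z ∈ E.edgeArc e') :
    ∃ v ∈ e, z = E.vtx v := by
  induction e with
  | h a b =>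
    induction e' with
    | h c d =>
      rcases (E.arc_inter (G.mem_edgeSet.1 he) (G.mem_edgeSet.1 he') hne ⟨hz, hz'⟩).1 with h | h
      · exact ⟨a, by simp, h⟩
      · exact ⟨b, by simp, h⟩

/-- Small discs around the vertices are pairwise disjoint and miss the other edges. -/
theorem exists_radius [Finite V] : ∃ R > 0, (∀ v w, v ≠ w → 2 * R < dist (E.vtx v) (E.vtx w)) ∧
    ∀ e ∈ G.edgeSet, ∀ v ∉ e, ∀ z ∈ E.edgeArc e, R < dist z (E.vtx v) := by
  have h1 : ∀ᶠ R in 𝓝[>] (0 : ℝ), ∀ v w, v ≠ w → 2 * R < dist (E.vtx v) (E.vtx w) := by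
    refine eventually_all.2 fun v => eventually_all.2 fun w => eventually_all.2 fun hne => ?_
    have hpos := dist_pos.2 (E.vtx_inj.ne hne)
    filter_upwards [Ioo_mem_nhdsGT (half_pos hpos)] with R hR
    linarith [hR.2]
  have h2 : ∀ᶠ R in 𝓝[>] (0 : ℝ), ∀ e, ∀ (_ : e ∈ G.edgeSet), ∀ v, ∀ (_ : v ∉ e),
      ∀ z ∈ E.edgeArc e, R < dist z (E.vtx v) := by
    refine eventually_all.2 fun e => eventually_all.2 fun he => eventually_all.2 fun v =>
      eventually_all.2 fun hv => ?_
    have hd : Disjoint (E.edgeArc e) {E.vtx v} :=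
      Set.disjoint_singleton_right.2 fun h => hv (E.mem_of_vtx_mem_edgeArc he h)
    obtain ⟨r, hr, hpos⟩ := ((eventually_disjoint_thickening (E.isCompact_edgeArc he)
      isClosed_singleton hd).and self_mem_nhdsWithin).exists
    filter_upwards [Ioo_mem_nhdsGT hpos] with R hR z hz
    by_contra! hcon
    refine Set.disjoint_left.1 hr (Metric.self_subset_thickening hpos _ hz) ?_
    exact Metric.mem_thickening_iff.2 ⟨_, rfl, hcon.trans_lt hR.2⟩
  obtain ⟨R, ⟨hR1, hR2⟩, hR⟩ := ((h1.and h2).and self_mem_nhdsWithin).exists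
  exact ⟨R, hR, hR1, hR2⟩

theorem exists_middle [Finite V] {R : ℝ} (hR : 0 < R)
    (hdist : ∀ v w, v ≠ w → 2 * R < dist (E.vtx v) (E.vtx w)) (e : Sym2 V) (he : e ∈ G.edgeSet) :
    ∃ (K : Set ℂ) (A : V → ℂ), K ⊆ E.edgeArc e ∧ IsCompact K ∧ IsPreconnected K ∧
      ∀ v ∈ e, A v ∈ K ∧ dist (A v) (E.vtx v) = R ∧
        ∀ z ∈ K, dist z (E.vtx v) ≤ R → z = A v := by
  classical
  induction e with
  | h u v =>
    have hadj := G.mem_edgeSet.1 he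
    obtain ⟨γ, hγ, -, h0, h1, h⟩ := E.arc_curve hadj
    obtain ⟨K, hK, hKc, hKp, a, ha, b, hb, hau, hbv, hKa, hKb⟩ := exists_middle_piece hγ hR
      (by rw [h0, h1]; exact hdist u v hadj.ne)
    rw [h0] at hau hKa
    rw [h1] at hbv hKb
    refine ⟨K, fun w => if w = u then a else b, hK.trans h.ge, hKc, hKp, fun w hw => ?_⟩
    rcases Sym2.mem_iff.1 hw with rfl | rfl
    · simpa using ⟨ha, hau, hKa⟩
    · simpa [hadj.ne'] using ⟨hb, hbv, hKb⟩

/-- A plane embedding of a finite graph can be replaced by a polygonal drawing. -/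
theorem nonempty_polyDrawing [Finite V] (E : PlaneEmbedding G) : Nonempty (PolyDrawing G) := by
  obtain ⟨R, hR, hvv, hev⟩ := E.exists_radius
  choose! K A hKsub hKc hKp hA using E.exists_middle hR hvv
  have hvtxK : ∀ e ∈ G.edgeSet, ∀ v, E.vtx v ∉ K e := by
    intro e he v hv
    have hve := E.mem_of_vtx_mem_edgeArc he (hKsub e he hv)
    obtain ⟨-, h1, h2⟩ := hA e he v hve
    have h3 := h2 _ hv (by simp [hR.le])
    rw [← h3, _root_.dist_self] at h1
    exact hR.ne h1
  have hKK : ∀ e ∈ G.edgeSet, ∀ e' ∈ G.edgeSet, e ≠ e' → Disjoint (K e) (K e') := by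
    intro e he e' he' hne
    refine Set.disjoint_left.2 fun z hz hz' => ?_
    obtain ⟨v, -, rfl⟩ := E.exists_vtx_of_mem_edgeArc he he' hne (hKsub e he hz) (hKsub e' he' hz')
    exact hvtxK e he v hz
  have hKL : ∀ e ∈ G.edgeSet, ∀ e' ∈ G.edgeSet, e ≠ e' → ∀ v ∈ e',
      Disjoint (K e) (segment ℝ (E.vtx v) (A e' v)) := by
    intro e he e' he' hne v hv
    refine Set.disjoint_left.2 fun z hz hz' => ?_
    obtain ⟨hAK', hAR', -⟩ := hA e' he' v hv
    have hzR : dist z (E.vtx v) ≤ R := (dist_le_of_mem_segment hz').trans_eq hAR'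
    by_cases hve : v ∈ e
    · obtain ⟨-, hAR, huniq⟩ := hA e he v hve
      have hzA := eq_of_mem_radius hz' (by rw [huniq z hz hzR, hAR, hAR'])
      exact Set.disjoint_left.1 (hKK e he e' he' hne) hz (hzA ▸ hAK')
    · exact (hev e he v hve z (hKsub e he hz)).not_ge hzR
  have hLL : ∀ e ∈ G.edgeSet, ∀ e' ∈ G.edgeSet, e ≠ e' → ∀ v ∈ e, ∀ v' ∈ e',
      ∀ z ∈ segment ℝ (E.vtx v) (A e v), z ∈ segment ℝ (E.vtx v') (A e' v') →
        z ∈ Set.range E.vtx := by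
    intro e he e' he' hne v hv v' hv' z hz hz'
    obtain ⟨hAK, hAR, -⟩ := hA e he v hv
    obtain ⟨hAK', hAR', -⟩ := hA e' he' v' hv'
    by_cases hvv' : v = v'
    · subst hvv'
      refine ⟨v, (eq_center_of_mem_radii hAR hAR' hz hz' fun h => ?_).symm⟩
      exact Set.disjoint_left.1 (hKK e he e' he' hne) hAK (h ▸ hAK')
    · have h1 := dist_le_of_mem_segment hz
      have h2 := dist_le_of_mem_segment hz'
      have h3 := dist_triangle_left (E.vtx v) (E.vtx v') z
      linarith [hvv v v' hvv']
  have hδ1 : ∀ᶠ δ in 𝓝[>] (0 : ℝ), ∀ e, ∀ (_ : e ∈ G.edgeSet), ∀ v,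
      Disjoint (Metric.thickening δ (K e)) (Metric.thickening δ {E.vtx v}) :=
    eventually_all.2 fun e => eventually_all.2 fun he => eventually_all.2 fun v =>
      eventually_disjoint_thickening (hKc e he) isClosed_singleton
        (Set.disjoint_singleton_right.2 (hvtxK e he v))
  have hδ2 : ∀ᶠ δ in 𝓝[>] (0 : ℝ), ∀ e, ∀ (_ : e ∈ G.edgeSet), ∀ e', ∀ (_ : e' ∈ G.edgeSet),
      ∀ (_ : e ≠ e'), Disjoint (Metric.thickening δ (K e)) (Metric.thickening δ (K e')) :=
    eventually_all.2 fun e => eventually_all.2 fun he => eventually_all.2 fun e' =>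
      eventually_all.2 fun he' => eventually_all.2 fun hne =>
        eventually_disjoint_thickening (hKc e he) (hKc e' he').isClosed (hKK e he e' he' hne)
  have hδ3 : ∀ᶠ δ in 𝓝[>] (0 : ℝ), ∀ e, ∀ (_ : e ∈ G.edgeSet), ∀ e', ∀ (_ : e' ∈ G.edgeSet),
      ∀ (_ : e ≠ e'), ∀ v, ∀ (_ : v ∈ e'), Disjoint (Metric.thickening δ (K e))
        (Metric.thickening δ (segment ℝ (E.vtx v) (A e' v))) :=
    eventually_all.2 fun e => eventually_all.2 fun he => eventually_all.2 fun e' =>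
      eventually_all.2 fun he' => eventually_all.2 fun hne => eventually_all.2 fun v =>
        eventually_all.2 fun hv => eventually_disjoint_thickening (hKc e he)
          (isCompact_segment _ _).isClosed (hKL e he e' he' hne v hv)
  obtain ⟨δ, ⟨⟨hδ1, hδ2⟩, hδ3⟩, hδ⟩ := (((hδ1.and hδ2).and hδ3).and self_mem_nhdsWithin).exists
  replace hδ : 0 < δ := hδ
  refine exists_polyDrawing G E.vtx E.vtx_inj (fun e => Metric.thickening δ (K e) ∪
    {z | ∃ v ∈ e, z ∈ segment ℝ (E.vtx v) (A e v)}) ?_ ?_ ?_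
  · intro u v huv
    have hrad : ∀ w ∈ s(u, v), PolyJoined _ (E.vtx w) (A s(u, v) w) := fun w hw =>
      polyJoined_of_segment (S := Metric.thickening δ (K s(u, v)) ∪
        {z | ∃ w ∈ s(u, v), z ∈ segment ℝ (E.vtx w) (A s(u, v) w)})
        fun z hz => Or.inr ⟨w, hw, hz⟩
    refine ((hrad u (by simp)).trans ?_).trans (hrad v (by simp)).symm
    refine PolyJoined.mono Set.subset_union_left ?_
    refine (hKp _ huv).polyJoined (fun x hx => ?_) (hA _ huv u (by simp)).1
      (hA _ huv v (by simp)).1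
    filter_upwards [nhdsWithin_le_nhds (Metric.ball_mem_nhds x hδ)] with y hy
    exact ((convex_ball x δ).segment_subset (Metric.mem_ball_self hδ) hy).trans
      (Metric.ball_subset_thickening hx δ)
  · rintro e he e' he' hne z ⟨hz | ⟨v, hv, hz⟩, hz' | ⟨v', hv', hz'⟩⟩
    · exact (Set.disjoint_left.1 (hδ2 e he e' he' hne) hz hz').elim
    · exact (Set.disjoint_left.1 (hδ3 e he e' he' hne v' hv') hz
        (Metric.self_subset_thickening hδ _ hz')).elim
    · exact (Set.disjoint_left.1 (hδ3 e' he' e he hne.symm v hv) hz'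
        (Metric.self_subset_thickening hδ _ hz)).elim
    · exact hLL e he e' he' hne v hv v' hv' z hz hz'
  · rintro e he w (hw | ⟨v, hv, hw⟩)
    · exact (Set.disjoint_left.1 (hδ1 e he w) hw
        (Metric.self_subset_thickening hδ _ rfl)).elim
    · by_contra hwe
      have h1 := dist_le_of_mem_segment hw
      have h2 := hvv w v fun h => hwe (h ▸ hv)
      linarith [(hA e he v hv).2.1]

end PlaneEmbedding

namespace PolyDrawing

variable {G : SimpleGraph V}

/-- The image of a polygonal drawing under an injective linear map. -/
noncomputable def map (D : PolyDrawing G) (L : ℂ →ₗ[ℝ] ℂ) (hL : Function.Injective L) :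
    PolyDrawing G where
  vtx v := L (D.vtx v)
  src := D.src
  tgt := D.tgt
  len := D.len
  pt e i := L (D.pt e i)
  mk_eq := D.mk_eq
  vtx_inj := hL.comp D.vtx_inj
  len_pos := D.len_pos
  pt_zero e := congrArg L (D.pt_zero e)
  pt_len e := congrArg L (D.pt_len e)
  pt_ne_vtx e i v hi hi' h := D.pt_ne_vtx e i v hi hi' (hL h)
  pt_inj e i e' j hi hi' hj h := D.pt_inj e i e' j hi hi' hj (hL h)
  seg_inter e i e' j hi hj hne z hz hz' := by
    have himage : ∀ a b, segment ℝ (L a) (L b) = L '' segment ℝ a b := fun a b =>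
      (image_segment ℝ L.toAffineMap a b).symm
    rw [himage] at hz hz'
    obtain ⟨w, hw, rfl⟩ := hz
    obtain ⟨w', hw', h⟩ := hz'
    rw [hL h] at hw'
    exact (D.seg_inter e i e' j hi hj hne w hw hw').imp (congrArg L) (congrArg L)
  vtx_mem e i v hi h := by
    have himage : ∀ a b, segment ℝ (L a) (L b) = L '' segment ℝ a b := fun a b =>
      (image_segment ℝ L.toAffineMap a b).symm
    rw [himage] at h
    obtain ⟨w, hw, h⟩ := h
    rw [hL h] at hw
    exact (D.vtx_mem e i v hi hw).imp (congrArg L) (congrArg L)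

theorem nodes_map_subset (D : PolyDrawing G) (L : ℂ →ₗ[ℝ] ℂ) (hL : Function.Injective L) :
    (D.map L hL).nodes ⊆ L '' D.nodes := by
  rintro _ (⟨v, rfl⟩ | ⟨e, i, hi, rfl⟩)
  · exact ⟨_, Or.inl ⟨v, rfl⟩, rfl⟩
  · exact ⟨_, Or.inr ⟨e, i, hi, rfl⟩, rfl⟩

end PolyDrawing

/-- The shear of the plane parallel to the real axis. -/
noncomputable def shear (c : ℝ) : ℂ →ₗ[ℝ] ℂ :=
  LinearMap.id + (Complex.imLm.smulRight (c : ℂ))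

theorem shear_re (c : ℝ) (z : ℂ) : (shear c z).re = z.re + z.im * c := by
  simp [shear]

theorem shear_im (c : ℝ) (z : ℂ) : (shear c z).im = z.im := by
  simp [shear]

theorem shear_injective (c : ℝ) : Function.Injective (shear c) := by
  intro z w h
  have him : z.im = w.im := by rw [← shear_im c z, h, shear_im]
  refine Complex.ext ?_ him
  have hre := congrArg Complex.re h
  rw [shear_re, shear_re, him] at hre
  exact add_right_cancel hre

/-- Some shear separates the real parts of finitely many points. -/
theorem exists_shear_injOn {N : Set ℂ} (hN : N.Finite) : ∃ c, (shear c '' N).InjOn Complex.re := by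
  obtain ⟨c, hc⟩ := ((hN.prod hN).image
    fun p : ℂ × ℂ => -(p.1.re - p.2.re) / (p.1.im - p.2.im)).infinite_compl.nonempty
  refine ⟨c, ?_⟩
  rintro _ ⟨z, hz, rfl⟩ _ ⟨w, hw, rfl⟩ h
  rw [shear_re, shear_re] at h
  by_cases him : z.im = w.im
  · rw [him] at h
    rw [Complex.ext (add_right_cancel h) him]
  · refine (hc ⟨(z, w), ⟨hz, hw⟩, ?_⟩).elim
    have := sub_ne_zero.2 him
    simp only
    field_simp
    linarith

theorem PolyDrawing.exists_injOn_re [Finite V] {G : SimpleGraph V} (D : PolyDrawing G) :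
    ∃ D' : PolyDrawing G, D'.nodes.InjOn Complex.re := by
  obtain ⟨c, hc⟩ := exists_shear_injOn D.finite_nodes
  exact ⟨D.map (shear c) (shear_injective c), hc.mono (D.nodes_map_subset _ _)⟩

/-- If `G` is a planar triangulation on `n` vertices, then `τ(G) = n - 2`. -/
theorem tau_eq_of_planar_triangulation (V : Type) [Fintype V] (G : SimpleGraph V)
    (hG : MaximalPlanar G) : tau G = Fintype.card V - 2 := by
  classical
  rcases le_or_gt 3 (Fintype.card V) with h3 | h3
  · obtain ⟨D⟩ := hG.1.some.nonempty_polyDrawing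
    obtain ⟨D', hre⟩ := D.exists_injOn_re
    have := (D'.segmentGraph hre).finite_faces.to_subtype
    have := Fintype.ofFinite (D'.segmentGraph hre).faces
    exact (hG.isTriangular D' hre).tau_eq h3
  · rw [Nat.sub_eq_zero_of_le (by omega)]
    refine Nat.sInf_eq_zero.2 (Or.inl ⟨∅, ⟨by simp, fun t ht => ?_⟩, rfl⟩)
    have := ht.card_eq ▸ t.card_le_univ
    omega
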